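/- Verma-type modules: Fix a weight Λ = (λ_a[n])_{1≤a≤M+N, n≥1} with λ_a[n] ∈ ℂ. Let J(Λ) ⊆ Y(gl(M|N)) be the left ideal generated by the elements t^a_b[n] for all a < b, n ≥ 1, together with t^a_a[n] − λ_a[n]·1 for all a and n ≥ 1, and set V̄(Λ) = Y(gl(M|N))/J(Λ), a left Y(gl(M|N))-module with cyclic vector v_+ = 1 + J(Λ). Then V̄(Λ) ≠ 0 (so v_+ is a maximal vector of weight Λ), and V̄(Λ) contains a unique maximal proper submodule, i.e. the sum of all submodules not containing v_+ is a proper submodule containing every proper submodule. -/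

import Mathlib

/-!
The submodule structure of `V̄(Λ)` is controlled by the element `H = -∑ a t^a_a[1]` (`Hel`), with
`a` the 0-based index, since `[H, t^c_d[n]] = (d - c) t^c_d[n]`. The super Yangian is spanned by
products (lower triangular)(diagonal)(upper triangular) of generators (`span_triangular`), and only
the purely diagonal products preserve the `H`-eigenvalue `h₀` of a maximal vector `v`, up to
products that annihilate `v`. Hence `y v = p_y(Λ) v + w` with `p_y` a polynomial in the weight,
independent of the module, and `w` annihilated by a polynomial in `H` that does not vanish at `h₀`
(`exists_poly`). For `y ∈ J(Λ)` the polynomial can be chosen to vanish at `Λ`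
(`exists_poly_of_mem`).

The ideal `J(Λ)` is proper (`one_notMem_vermaIdeal`). Indeed, if it contains `1`, there is a
polynomial `q` with `q(Λ) = 0` and `q(Λ') = 1` for each weight `Λ'` of a maximal vector in any
module. Many such weights come from explicit modules: a Fock space of super-oscillators carries
supercommuting representations `e_s` of `gl(M|N)` with a common maximal vector (`exists_gl`), the
product of the matrices `1 + x e_s` satisfies the RTT relation (`exists_monodromy`), and the
coefficients of this product satisfy the defining relations (`exists_realization`). The generating
functions of the resulting weights are products of factors `1 - k x` over natural numbers `k`. A
polynomial identity valid for natural `k` is valid for complex `k`, and with complex `k` any finite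
part of any weight is attained (`exists_approx`). So `q` is `1` at every weight (`evalW_eq_one`),
contradicting `q(Λ) = 0`.

Finally, a submodule with an element that has a nonzero component along `v_+` contains `v_+`, by
applying a polynomial in `H` (`mem_away_of_mem`). Submodules avoiding `v_+` thus lie in the space
`away` of vectors without such a component, and so does their sum, which is therefore proper. A
proper submodule avoids `v_+` because `v_+` is cyclic.
-/

open scoped BigOperators TensorProduct

namespace SY

/-- The parity `[a]` of an index: `0` if `a ≤ M` (1-based), `1` otherwise.  Indices are 0-based
`Fin (M+N)`, so `[a] = 0` iff `a < M`. -/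
def pa (M : ℕ) {k : ℕ} (a : Fin k) : ℕ := if (a : ℕ) < M then 0 else 1

/-- Index type for the generators of the super Yangian: `(a, b, k)` encodes `t^a_b[k+1]`. -/
abbrev Gen (M N : ℕ) := Fin (M + N) × Fin (M + N) × ℕ

/-- The free algebra on the generators. -/
abbrev F (M N : ℕ) := FreeAlgebra ℂ (Gen M N)

/-- `T M N a b n` is the free-algebra element corresponding to `t^a_b[n]` (`n ≥ 1`). -/
noncomputable def T (M N : ℕ) (a b : Fin (M + N)) (n : ℕ) : F M N :=
  FreeAlgebra.ι ℂ ((a, b, n - 1) : Gen M N)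

noncomputable def sgn1 (M : ℕ) {k : ℕ} (a1 b1 a2 b2 : Fin k) : ℂ :=
  (-1 : ℂ) ^ ((pa M a1 + pa M b1) * (pa M a2 + pa M b2))

noncomputable def sgn2 (M : ℕ) {k : ℕ} (a1 b1 a2 : Fin k) : ℂ :=
  (-1 : ℂ) ^ (pa M a1 * pa M a2 + pa M b1 * (pa M a1 + pa M a2))

/-- The defining relations of the super Yangian `Y(gl(M|N))`. -/
inductive Rel (M N : ℕ) : F M N → F M N → Prop
  | defining (a1 b1 a2 b2 : Fin (M + N)) (m n : ℕ) (hm : 1 ≤ m) (hn : 1 ≤ n) :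
      Rel M N
        (T M N a1 b1 m * T M N a2 b2 n - sgn1 M a1 b1 a2 b2 • (T M N a2 b2 n * T M N a1 b1 m))
        ((if b1 = a2 then T M N a1 b2 (m + n - 1) else 0)
          - sgn1 M a1 b1 a2 b2 • (if b2 = a1 then T M N a2 b1 (m + n - 1) else 0)
          + sgn2 M a1 b1 a2 •
              ∑ r ∈ Finset.Ico 1 (min m n),
                (T M N a2 b1 r * T M N a1 b2 (m + n - 1 - r)
                  - T M N a2 b1 (m + n - 1 - r) * T M N a1 b2 r))

/-- The super Yangian `Y(gl(M|N))` as the quotient of the free algebra by the defining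
relations. -/
abbrev Y (M N : ℕ) := RingQuot (Rel M N)

/-- The generator `t^a_b[n]` of `Y(gl(M|N))` (for `n ≥ 1`). -/
noncomputable def t (M N : ℕ) (a b : Fin (M + N)) (n : ℕ) : Y M N :=
  RingQuot.mkAlgHom ℂ (Rel M N) (T M N a b n)

/-- The generator of `Y(gl(M|N))` indexed by `g : Gen M N`, i.e. `t^a_b[k+1]` for
`g = (a,b,k)`. -/
noncomputable def tg (M N : ℕ) (g : Gen M N) : Y M N :=
  RingQuot.mkAlgHom ℂ (Rel M N) (FreeAlgebra.ι ℂ g)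

/-- `g` indexes an odd generator iff `[a]+[b]` is odd. -/
abbrev oddG (M N : ℕ) (g : Gen M N) : Prop := (pa M g.1 + pa M g.2.1) % 2 = 1

/-- A representation of `Y(gl(M|N))` is irreducible if the space is nonzero and the only
invariant subspaces are `⊥` and `⊤`. -/
def IsIrreducibleRep (M N : ℕ) {V : Type*} [AddCommGroup V] [Module ℂ V]
    (ρ : Y M N →ₐ[ℂ] Module.End ℂ V) : Prop :=
  (∃ v : V, v ≠ 0) ∧
    ∀ W : Submodule ℂ V, (∀ y : Y M N, ∀ w ∈ W, ρ y w ∈ W) → W = ⊥ ∨ W = ⊤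

/-- `v` is a maximal vector of weight `Λ = (λ_a[n])`. -/
def IsMaximalVec (M N : ℕ) {V : Type*} [AddCommGroup V] [Module ℂ V]
    (ρ : Y M N →ₐ[ℂ] Module.End ℂ V) (v : V) (Λ : Fin (M + N) → ℕ → ℂ) : Prop :=
  v ≠ 0 ∧
    (∀ a b : Fin (M + N), a < b → ∀ n : ℕ, 1 ≤ n → ρ (t M N a b n) v = 0) ∧
    (∀ (a : Fin (M + N)) (n : ℕ), 1 ≤ n → ρ (t M N a a n) v = Λ a n • v)


/-- The left ideal `J(Λ)` generated by the `t^a_b[n]` with `a < b`, `n ≥ 1`, and the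
`t^a_a[n] − λ_a[n]·1`, `n ≥ 1`. -/
noncomputable def vermaIdeal (M N : ℕ) (Λ : Fin (M + N) → ℕ → ℂ) :
    Submodule (Y M N) (Y M N) :=
  Submodule.span (Y M N)
    ({x | ∃ (a b : Fin (M + N)) (n : ℕ), a < b ∧ 1 ≤ n ∧ x = t M N a b n} ∪
     {x | ∃ (a : Fin (M + N)) (n : ℕ), 1 ≤ n ∧
        x = t M N a a n - algebraMap ℂ (Y M N) (Λ a n)})

/-- The Verma-type module `V̄(Λ) = Y(gl(M|N))/J(Λ)`, with cyclic vector `v_+ = 1 + J(Λ)`. -/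
noncomputable def vermaVplus (M N : ℕ) (Λ : Fin (M + N) → ℕ → ℂ) :
    Y M N ⧸ vermaIdeal M N Λ :=
  Submodule.Quotient.mk 1

section

/-! ### Triangular spanning set of the super Yangian -/

lemma t_eq_tg (M N : ℕ) (a b : Fin (M + N)) (n : ℕ) : t M N a b n = tg M N (a, b, n - 1) := rfl

/-- The defining relation, read in the super Yangian. -/
lemma t_rel (M N : ℕ) (a1 b1 a2 b2 : Fin (M + N)) (m n : ℕ) (hm : 1 ≤ m) (hn : 1 ≤ n) :
    t M N a1 b1 m * t M N a2 b2 n - sgn1 M a1 b1 a2 b2 • (t M N a2 b2 n * t M N a1 b1 m)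
      = (if b1 = a2 then t M N a1 b2 (m + n - 1) else 0)
          - sgn1 M a1 b1 a2 b2 • (if b2 = a1 then t M N a2 b1 (m + n - 1) else 0)
          + sgn2 M a1 b1 a2 •
              ∑ r ∈ Finset.Ico 1 (min m n),
                (t M N a2 b1 r * t M N a1 b2 (m + n - 1 - r)
                  - t M N a2 b1 (m + n - 1 - r) * t M N a1 b2 r) := by
  have h := RingQuot.mkAlgHom_rel ℂ (Rel.defining a1 b1 a2 b2 m n hm hn)
  simp only [map_sub, map_add, map_mul, map_smul, map_sum, apply_ite, map_zero] at h
  simpa only [t, apply_ite, map_zero] using h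

/-- The degree of a generator: `t^a_b[n]` has degree `n`. -/
def gdeg {M N : ℕ} (g : Gen M N) : ℕ := g.2.2 + 1

/-- Total degree of a word in the generators. -/
def wdeg {M N : ℕ} (l : List (Gen M N)) : ℕ := (l.map gdeg).sum

/-- The product in the super Yangian of a word in the generators. -/
noncomputable def wprod {M N : ℕ} (l : List (Gen M N)) : Y M N := (l.map (tg M N)).prod

/-- The span of all words of degree less than `d`. -/
noncomputable def Wlt (M N d : ℕ) : Submodule ℂ (Y M N) :=
  Submodule.span ℂ {y | ∃ l : List (Gen M N), wdeg l < d ∧ wprod l = y}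

variable {M N : ℕ}

lemma wprod_cons (g : Gen M N) (l : List (Gen M N)) : wprod (g :: l) = tg M N g * wprod l := by
  simp [wprod]

lemma wdeg_cons (g : Gen M N) (l : List (Gen M N)) : wdeg (g :: l) = gdeg g + wdeg l := by
  simp [wdeg]

lemma wprod_append (l l' : List (Gen M N)) : wprod (l ++ l') = wprod l * wprod l' := by
  simp [wprod]

lemma wdeg_append (l l' : List (Gen M N)) : wdeg (l ++ l') = wdeg l + wdeg l' := by
  simp [wdeg]

lemma wdeg_perm {l l' : List (Gen M N)} (h : l.Perm l') : wdeg l = wdeg l' :=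
  (h.map _).sum_eq

lemma wprod_mem_Wlt {l : List (Gen M N)} {d : ℕ} (h : wdeg l < d) : wprod l ∈ Wlt M N d :=
  Submodule.subset_span ⟨l, h, rfl⟩

lemma Wlt_mul_left (l : List (Gen M N)) {d e : ℕ} (hde : wdeg l + d ≤ e) {x : Y M N}
    (hx : x ∈ Wlt M N d) : wprod l * x ∈ Wlt M N e := by
  induction hx using Submodule.span_induction with
  | mem x h =>
    obtain ⟨l', h', rfl⟩ := h
    rw [← wprod_append]
    exact wprod_mem_Wlt (by rw [wdeg_append]; omega)
  | zero => simp
  | add x y _ _ hx hy => rw [mul_add]; exact add_mem hx hy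
  | smul c x _ hx => rw [mul_smul_comm]; exact Submodule.smul_mem _ _ hx

lemma Wlt_mul_right (l : List (Gen M N)) {d e : ℕ} (hde : d + wdeg l ≤ e) {x : Y M N}
    (hx : x ∈ Wlt M N d) : x * wprod l ∈ Wlt M N e := by
  induction hx using Submodule.span_induction with
  | mem x h =>
    obtain ⟨l', h', rfl⟩ := h
    rw [← wprod_append]
    exact wprod_mem_Wlt (by rw [wdeg_append]; omega)
  | zero => simp
  | add x y _ _ hx hy => rw [add_mul]; exact add_mem hx hy
  | smul c x _ hx => rw [smul_mul_assoc]; exact Submodule.smul_mem _ _ hx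

lemma tg_mem_Wlt (g : Gen M N) {d : ℕ} (h : gdeg g < d) : tg M N g ∈ Wlt M N d := by
  simpa [wprod] using wprod_mem_Wlt (l := [g]) (d := d) (by simpa [wdeg] using h)

lemma tg_mul_mem_Wlt (g h : Gen M N) {d : ℕ} (hd : gdeg g + gdeg h < d) :
    tg M N g * tg M N h ∈ Wlt M N d := by
  simpa [wprod] using wprod_mem_Wlt (l := [g, h]) (d := d) (by simpa [wdeg] using hd)

/-- Two generators supercommute modulo words of smaller degree: every term on the right-hand side
of the defining relation has degree one less than the left-hand side. -/
lemma tg_swap (g h : Gen M N) :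
    ∃ c : ℂ, tg M N g * tg M N h - c • (tg M N h * tg M N g) ∈ Wlt M N (gdeg g + gdeg h) := by
  obtain ⟨a1, b1, m⟩ := g
  obtain ⟨a2, b2, n⟩ := h
  refine ⟨sgn1 M a1 b1 a2 b2, ?_⟩
  have h := t_rel M N a1 b1 a2 b2 (m + 1) (n + 1) (by omega) (by omega)
  simp only [t_eq_tg, Nat.add_sub_cancel] at h
  rw [h]
  have hlin : ∀ (P : Prop) [Decidable P] (a b : Fin (M + N)),
      (if P then tg M N (a, b, m + 1 + (n + 1) - 1 - 1) else 0) ∈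
        Wlt M N (gdeg (a1, b1, m) + gdeg (a2, b2, n)) := by
    intro P _ a b
    split_ifs
    · exact tg_mem_Wlt _ (by simp only [gdeg]; omega)
    · exact zero_mem _
  refine add_mem (sub_mem (hlin _ _ _) (Submodule.smul_mem _ _ (hlin _ _ _)))
    (Submodule.smul_mem _ _ (Submodule.sum_mem _ fun r hr => ?_))
  rw [Finset.mem_Ico] at hr
  refine sub_mem ?_ ?_ <;> exact tg_mul_mem_Wlt _ _ (by simp only [gdeg]; omega)

/-- Rearranging a word changes its product by a scalar and by words of smaller degree. -/
lemma wprod_perm {l l' : List (Gen M N)} (h : l.Perm l') :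
    ∃ c : ℂ, wprod l - c • wprod l' ∈ Wlt M N (wdeg l) := by
  induction h with
  | nil => exact ⟨1, by simp⟩
  | cons x h ih =>
    obtain ⟨c, hc⟩ := ih
    refine ⟨c, ?_⟩
    have := Wlt_mul_left [x] le_rfl hc
    rw [← wdeg_append] at this
    simpa [wprod_cons, wprod, mul_sub] using this
  | swap x y l =>
    obtain ⟨c, hc⟩ := tg_swap y x
    refine ⟨c, ?_⟩
    have := Wlt_mul_right l (e := wdeg (y :: x :: l))
      (by rw [wdeg_cons, wdeg_cons]; omega) hc
    simpa [wprod_cons, sub_mul, mul_assoc] using this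
  | trans h1 _ ih1 ih2 =>
    obtain ⟨c1, hc1⟩ := ih1
    obtain ⟨c2, hc2⟩ := ih2
    refine ⟨c1 * c2, ?_⟩
    rw [← wdeg_perm h1] at hc2
    convert add_mem hc1 (Submodule.smul_mem _ c1 hc2) using 1
    rw [smul_sub, smul_smul]; abel

/-- Products `L * D * U` of a word in lowering generators (`a > b`), a word in diagonal ones and a
word in raising generators (`a < b`). -/
def triangular (M N : ℕ) : Set (Y M N) :=
  {y | ∃ L D U : List (Gen M N), (∀ g ∈ L, g.2.1 < g.1) ∧ (∀ g ∈ D, g.1 = g.2.1) ∧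
    (∀ g ∈ U, g.1 < g.2.1) ∧ y = wprod L * (wprod D * wprod U)}

lemma wprod_mem_span_triangular (l : List (Gen M N)) :
    wprod l ∈ Submodule.span ℂ (triangular M N) := by
  induction hd : wdeg l using Nat.strong_induction_on generalizing l with
  | _ d ih =>
    let L := l.filter fun g => g.2.1 < g.1
    let R := l.filter fun g => !decide (g.2.1 < g.1)
    let D := R.filter fun g => g.1 = g.2.1
    let U := R.filter fun g => !decide (g.1 = g.2.1)
    have h1 : (L ++ R).Perm l := List.filter_append_perm _ _
    have h2 : (D ++ U).Perm R := List.filter_append_perm _ _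
    have h3 : l.Perm (L ++ (D ++ U)) := ((h2.append_left L).trans h1).symm
    obtain ⟨c, hc⟩ := wprod_perm h3
    have hW : Wlt M N (wdeg l) ≤ Submodule.span ℂ (triangular M N) := by
      refine Submodule.span_le.2 ?_
      rintro _ ⟨l', h', rfl⟩
      exact ih _ (hd ▸ h') l' rfl
    have hT : wprod (L ++ (D ++ U)) ∈ Submodule.span ℂ (triangular M N) := by
      refine Submodule.subset_span ⟨L, D, U, ?_, ?_, ?_, by rw [wprod_append, wprod_append]⟩
      · intro g hg; simpa using (List.mem_filter.1 hg).2
      · intro g hg; simpa using (List.mem_filter.1 hg).2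
      · intro g hg
        have h4 := List.mem_filter.1 hg
        have h5 := List.mem_filter.1 h4.1
        have h6 : ¬ g.1 = g.2.1 := by simpa using h4.2
        have h7 : g.1 ≤ g.2.1 := by simpa using h5.2
        exact lt_of_le_of_ne h7 h6
    have := add_mem (hW hc) (Submodule.smul_mem _ c hT)
    simpa using this

lemma span_triangular : Submodule.span ℂ (triangular M N) = ⊤ := by
  have hword : ∀ y : Y M N, y ∈ Submodule.span ℂ (Set.range (wprod (M := M) (N := N))) := by
    intro y
    obtain ⟨x, rfl⟩ := RingQuot.mkAlgHom_surjective ℂ (Rel M N) y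
    suffices h : ∀ s ∈ Submodule.span ℂ (Set.range (wprod (M := M) (N := N))),
        RingQuot.mkAlgHom ℂ (Rel M N) x * s ∈ Submodule.span ℂ (Set.range wprod) by
      simpa using h 1 (Submodule.subset_span ⟨[], by simp [wprod]⟩)
    induction x using FreeAlgebra.induction with
    | grade0 r =>
      intro s hs
      rw [AlgHom.commutes, ← Algebra.smul_def]
      exact Submodule.smul_mem _ _ hs
    | grade1 g =>
      intro s hs
      induction hs using Submodule.span_induction with
      | mem x h =>
        obtain ⟨l, rfl⟩ := h
        exact Submodule.subset_span ⟨g :: l, wprod_cons g l⟩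
      | zero => simp
      | add x y _ _ hx hy => rw [mul_add]; exact add_mem hx hy
      | smul c x _ hx => rw [mul_smul_comm]; exact Submodule.smul_mem _ _ hx
    | mul a b ha hb =>
      intro s hs
      rw [map_mul, mul_assoc]
      exact ha _ (hb _ hs)
    | add a b ha hb =>
      intro s hs
      rw [map_add, add_mul]
      exact add_mem (ha _ hs) (hb _ hs)
  refine eq_top_iff.2 fun y _ => ?_
  refine (Submodule.span_le.2 ?_ : Submodule.span ℂ (Set.range (wprod (M := M) (N := N))) ≤ _)
    (hword y)
  rintro _ ⟨l, rfl⟩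
  exact wprod_mem_span_triangular l

/-! ### Weights and the component along a maximal vector -/

/-- The element `∑ (-a) • t^a_a[1]` (indices `0`-based), whose adjoint action multiplies
`t^c_d[n]` by `d - c`. -/
noncomputable def Hel (M N : ℕ) : Y M N := ∑ a : Fin (M + N), (-(a : ℂ)) • t M N a a 1

/-- The eigenvalue of `Hel` on a maximal vector of weight `Λ`. -/
noncomputable def h0 (Λ : Fin (M + N) → ℕ → ℂ) : ℂ := ∑ a : Fin (M + N), -(a : ℂ) * Λ a 1

lemma weighted_comm {A : Type*} [Ring A] [Algebra ℂ A] {n : ℕ} (x : Fin n → A) (g : A)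
    (c d : Fin n)
    (key : ∀ a, x a * g - g * x a = (if a = c then g else 0) - (if a = d then g else 0)) :
    (∑ a : Fin n, (-(a : ℂ)) • x a) * g - g * (∑ a : Fin n, (-(a : ℂ)) • x a) = ((d : ℂ) - c) • g := by
  rw [Finset.sum_mul, Finset.mul_sum, ← Finset.sum_sub_distrib]
  have : ∀ a : Fin n, ((-(a : ℂ)) • x a) * g - g * ((-(a : ℂ)) • x a)
      = (if a = c then (-(a : ℂ)) • g else 0) - (if a = d then (-(a : ℂ)) • g else 0) := by
    intro a
    rw [mul_smul_comm, smul_mul_assoc, ← smul_sub, key a, smul_sub]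
    simp only [smul_ite, smul_zero]
  simp only [this, Finset.sum_sub_distrib, Finset.sum_ite_eq', Finset.mem_univ, if_true, ← sub_smul]
  congr 1
  ring

lemma Hel_comm (c d : Fin (M + N)) (k : ℕ) :
    Hel M N * tg M N (c, d, k) - tg M N (c, d, k) * Hel M N
      = ((d : ℂ) - c) • tg M N (c, d, k) := by
  have key : ∀ a : Fin (M + N), t M N a a 1 * tg M N (c, d, k) - tg M N (c, d, k) * t M N a a 1
      = (if a = c then tg M N (c, d, k) else 0) - (if a = d then tg M N (c, d, k) else 0) := by
    intro a
    have h := t_rel M N a a c d 1 (k + 1) le_rfl (by omega)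
    have hs : sgn1 M a a c d = 1 := by
      unfold sgn1
      rw [Even.neg_one_pow]
      exact (Even.add_self _).mul_right _
    rw [hs] at h
    simp only [one_smul, t_eq_tg, Nat.add_sub_cancel] at h
    have h1 : min 1 (k + 1) = 1 := by omega
    rw [h1] at h
    simp only [Finset.Ico_self, Finset.sum_empty, smul_zero, add_zero,
      show 1 + (k + 1) - 1 - 1 = k by omega] at h
    rw [t_eq_tg, h]
    congr 1
    · by_cases hac : a = c
      · subst hac; simp
      · simp [hac]
    · by_cases hac : a = d
      · subst hac; simp
      · simp [hac, Ne.symm hac]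
  exact weighted_comm _ _ _ _ key

variable {V : Type*} [AddCommGroup V] [Module ℂ V]

/-- The vectors annihilated by a polynomial in `H` that does not vanish at `h`.  When `H` is
diagonalizable this is the sum of the eigenspaces of `H` for the eigenvalues other than `h`. -/
noncomputable def away (H : Module.End ℂ V) (h : ℂ) : Submodule ℂ V where
  carrier := {w | ∃ f : Polynomial ℂ, f.eval h ≠ 0 ∧ Polynomial.aeval H f w = 0}
  zero_mem' := ⟨1, by simp, by simp⟩
  add_mem' := by
    rintro x y ⟨f, hf, hx⟩ ⟨g, hg, hy⟩
    refine ⟨f * g, by simp [hf, hg], ?_⟩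
    have h2 : Polynomial.aeval H (f * g) y = 0 := by simp [hy]
    have h1 : Polynomial.aeval H (f * g) x = 0 := by rw [mul_comm]; simp [hx]
    rw [map_add, h1, h2, add_zero]
  smul_mem' := by
    rintro c x ⟨f, hf, hx⟩
    exact ⟨f, hf, by rw [map_smul, hx, smul_zero]⟩

lemma mem_away_of_eigen {H : Module.End ℂ V} {h μ : ℂ} {w : V} (hw : H w = μ • w) (hμ : μ ≠ h) :
    w ∈ away H h :=
  ⟨Polynomial.X - Polynomial.C μ, by simpa [sub_eq_zero] using hμ.symm, by
    simp [hw, Module.algebraMap_end_apply]⟩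

lemma aeval_eigen {H : Module.End ℂ V} {h : ℂ} {v : V} (hv : H v = h • v) (f : Polynomial ℂ) :
    Polynomial.aeval H f v = f.eval h • v := by
  induction f using Polynomial.induction_on' with
  | add p q hp hq => simp [hp, hq, add_smul]
  | monomial n a =>
    have : ∀ n : ℕ, (H ^ n) v = h ^ n • v := by
      intro n
      induction n with
      | zero => simp
      | succ n ih => rw [pow_succ', Module.End.mul_apply, ih, map_smul, hv, smul_smul, pow_succ]
    simp [Polynomial.aeval_monomial, this, Module.algebraMap_end_apply, mul_smul,
      smul_comm a (h ^ n)]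

lemma eq_zero_of_smul_mem_away {H : Module.End ℂ V} {h : ℂ} {v : V} (hv : H v = h • v)
    (hv0 : v ≠ 0) {c : ℂ} (hc : c • v ∈ away H h) : c = 0 := by
  obtain ⟨f, hf, hfv⟩ := hc
  rw [map_smul, aeval_eigen hv] at hfv
  simpa [hf, hv0] using hfv

/-- The conditions of `IsMaximalVec` other than `v ≠ 0`. -/
def IsSing (M N : ℕ) (ρ : Y M N →ₐ[ℂ] Module.End ℂ V) (v : V) (Λ : Fin (M + N) → ℕ → ℂ) : Prop :=
  (∀ a b : Fin (M + N), a < b → ∀ n : ℕ, 1 ≤ n → ρ (t M N a b n) v = 0) ∧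
    (∀ (a : Fin (M + N)) (n : ℕ), 1 ≤ n → ρ (t M N a a n) v = Λ a n • v)

lemma IsSing.H_apply {ρ : Y M N →ₐ[ℂ] Module.End ℂ V} {v : V} {Λ : Fin (M + N) → ℕ → ℂ}
    (h : IsSing M N ρ v Λ) : ρ (Hel M N) v = h0 Λ • v := by
  simp only [Hel, h0, map_sum, map_smul, LinearMap.sum_apply,
    LinearMap.smul_apply, h.2 _ 1 le_rfl, Finset.sum_smul, mul_smul]

lemma IsSing.upper {ρ : Y M N →ₐ[ℂ] Module.End ℂ V} {v : V} {Λ : Fin (M + N) → ℕ → ℂ}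
    (h : IsSing M N ρ v Λ) (U : List (Gen M N)) (hU : ∀ g ∈ U, g.1 < g.2.1) (hne : U ≠ []) :
    ρ (wprod U) v = 0 := by
  obtain ⟨g, U, rfl⟩ := List.exists_cons_of_ne_nil hne
  clear hne
  induction U generalizing g with
  | nil =>
    have := h.1 g.1 g.2.1 (hU g (by simp)) (g.2.2 + 1) (by omega)
    simpa [wprod, t_eq_tg] using this
  | cons g' U ih =>
    rw [wprod_cons, map_mul, Module.End.mul_apply, ih g' (fun x hx => hU x (by simp [hx])), map_zero]

lemma IsSing.diag {ρ : Y M N →ₐ[ℂ] Module.End ℂ V} {v : V} {Λ : Fin (M + N) → ℕ → ℂ}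
    (h : IsSing M N ρ v Λ) (D : List (Gen M N)) (hD : ∀ g ∈ D, g.1 = g.2.1) :
    ρ (wprod D) v = (D.map fun g => Λ g.1 (g.2.2 + 1)).prod • v := by
  induction D with
  | nil => simp [wprod]
  | cons g D ih =>
    have h1 : ρ (tg M N g) v = Λ g.1 (g.2.2 + 1) • v := by
      have := h.2 g.1 (g.2.2 + 1) (by omega)
      have h2 : g = (g.1, g.1, g.2.2) := by
        refine Prod.ext rfl (Prod.ext (hD g (by simp)).symm rfl)
      rw [h2]
      simpa [t_eq_tg] using this
    rw [wprod_cons, map_mul, Module.End.mul_apply, ih fun x hx => hD x (by simp [hx]), map_smul, h1,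
      smul_smul, List.map_cons, List.prod_cons, mul_comm]

/-- A word in lowering generators lowers the eigenvalue of `Hel` by at least its length. -/
lemma IsSing.lower {ρ : Y M N →ₐ[ℂ] Module.End ℂ V} {v : V} {Λ : Fin (M + N) → ℕ → ℂ}
    (h : IsSing M N ρ v Λ) (L : List (Gen M N)) (hL : ∀ g ∈ L, g.2.1 < g.1) :
    ∃ e : ℕ, L.length ≤ e ∧ ρ (Hel M N) (ρ (wprod L) v) = (h0 Λ - e) • ρ (wprod L) v := by
  induction L with
  | nil => exact ⟨0, le_rfl, by simp [wprod, h.H_apply]⟩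
  | cons g L ih =>
    obtain ⟨e, he, hHe⟩ := ih fun x hx => hL x (by simp [hx])
    have hg : (g.2.1 : ℕ) < (g.1 : ℕ) := hL g (by simp)
    refine ⟨e + ((g.1 : ℕ) - (g.2.1 : ℕ)), by simp; omega, ?_⟩
    have hc := Hel_comm (M := M) (N := N) g.1 g.2.1 g.2.2
    have hc' := congrArg (fun y => ρ y (ρ (wprod L) v)) (sub_eq_iff_eq_add.1 hc)
    simp only [map_mul, map_add, map_smul, Module.End.mul_apply, LinearMap.add_apply,
      LinearMap.smul_apply, hHe] at hc'
    rw [wprod_cons, map_mul, Module.End.mul_apply]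
    refine hc'.trans ?_
    rw [← add_smul]
    congr 1
    push_cast [Nat.cast_sub hg.le]
    ring

/-- Evaluation of polynomials in the variables `λ_a[k+1]`, indexed by `(a, k)`, at a weight. -/
noncomputable def evalW (Λ : Fin (M + N) → ℕ → ℂ) : MvPolynomial (Fin (M + N) × ℕ) ℂ →+* ℂ :=
  MvPolynomial.eval fun x => Λ x.1 (x.2 + 1)

/-- For each `y` in the super Yangian there is a polynomial `p` in the weight, independent of the
module, such that `p(Λ)` is the component of `y v` along any maximal vector `v` of weight `Λ`. -/
lemma exists_poly (y : Y M N) : ∃ p : MvPolynomial (Fin (M + N) × ℕ) ℂ,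
    ∀ (V : Type) [AddCommGroup V] [Module ℂ V] (ρ : Y M N →ₐ[ℂ] Module.End ℂ V) (v : V)
      (Λ : Fin (M + N) → ℕ → ℂ), IsSing M N ρ v Λ →
      ρ y v - evalW Λ p • v ∈ away (ρ (Hel M N)) (h0 Λ) := by
  have hy : y ∈ Submodule.span ℂ (triangular M N) := by rw [span_triangular]; trivial
  induction hy using Submodule.span_induction with
  | mem x h =>
    obtain ⟨L, D, U, hL, hD, hU, rfl⟩ := h
    by_cases hU0 : U = []
    · subst hU0
      by_cases hL0 : L = []
      · subst hL0
        refine ⟨(D.map fun g => MvPolynomial.X (g.1, g.2.2)).prod, fun V _ _ ρ v Λ h => ?_⟩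
        have : ρ (wprod [] * (wprod D * wprod [])) v = ρ (wprod D) v := by simp [wprod]
        rw [this, h.diag D hD, evalW, map_list_prod, List.map_map]
        simp [Function.comp_def]
      · refine ⟨0, fun V _ _ ρ v Λ h => ?_⟩
        have : ρ (wprod L * (wprod D * wprod [])) v
            = (D.map fun g => Λ g.1 (g.2.2 + 1)).prod • ρ (wprod L) v := by
          have h1 : (wprod ([] : List (Gen M N))) = 1 := by simp [wprod]
          rw [h1, mul_one, map_mul, Module.End.mul_apply, h.diag D hD, map_smul]
        rw [this, map_zero, zero_smul, sub_zero]
        refine Submodule.smul_mem _ _ ?_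
        obtain ⟨e, he, hHe⟩ := h.lower L hL
        refine mem_away_of_eigen hHe ?_
        have : e ≠ 0 := by
          have := List.length_pos_iff.2 hL0
          omega
        simpa [sub_eq_self] using this
    · refine ⟨0, fun V _ _ ρ v Λ h => ?_⟩
      rw [map_mul, map_mul, Module.End.mul_apply, Module.End.mul_apply, h.upper U hU hU0]
      simp
  | zero => exact ⟨0, fun V _ _ ρ v Λ h => by simp⟩
  | add x y _ _ hx hy =>
    obtain ⟨p, hp⟩ := hx
    obtain ⟨q, hq⟩ := hy
    refine ⟨p + q, fun V _ _ ρ v Λ h => ?_⟩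
    convert add_mem (hp V ρ v Λ h) (hq V ρ v Λ h) using 1
    rw [map_add, map_add, LinearMap.add_apply, add_smul]; abel
  | smul c x _ hx =>
    obtain ⟨p, hp⟩ := hx
    refine ⟨MvPolynomial.C c * p, fun V _ _ ρ v Λ h => ?_⟩
    convert Submodule.smul_mem _ c (hp V ρ v Λ h) using 1
    rw [map_smul, LinearMap.smul_apply, map_mul, smul_sub, smul_smul]
    simp [evalW]

/-- Elements of the left ideal `J(Λ₀)` act along maximal vectors by polynomials in the weight that
vanish at `Λ₀`. -/
lemma exists_poly_of_mem (Λ₀ : Fin (M + N) → ℕ → ℂ) {y : Y M N} (hy : y ∈ vermaIdeal M N Λ₀) :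
    ∃ p : MvPolynomial (Fin (M + N) × ℕ) ℂ, evalW Λ₀ p = 0 ∧
    ∀ (V : Type) [AddCommGroup V] [Module ℂ V] (ρ : Y M N →ₐ[ℂ] Module.End ℂ V) (v : V)
      (Λ : Fin (M + N) → ℕ → ℂ), IsSing M N ρ v Λ →
      ρ y v - evalW Λ p • v ∈ away (ρ (Hel M N)) (h0 Λ) := by
  unfold vermaIdeal at hy
  rw [← Set.image_id (_ ∪ _), Finsupp.mem_span_image_iff_linearCombination] at hy
  obtain ⟨l, hl, rfl⟩ := hy
  rw [Finsupp.linearCombination_apply, Finsupp.sum]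
  rw [Finsupp.mem_supported] at hl
  have hterm : ∀ x ∈ l.support, ∃ p : MvPolynomial (Fin (M + N) × ℕ) ℂ, evalW Λ₀ p = 0 ∧
    ∀ (V : Type) [AddCommGroup V] [Module ℂ V] (ρ : Y M N →ₐ[ℂ] Module.End ℂ V) (v : V)
      (Λ : Fin (M + N) → ℕ → ℂ), IsSing M N ρ v Λ →
      ρ (l x • id x) v - evalW Λ p • v ∈ away (ρ (Hel M N)) (h0 Λ) := by
    intro x hx
    rcases hl hx with ⟨a, b, n, hab, hn, rfl⟩ | ⟨a, n, hn, rfl⟩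
    · refine ⟨0, by simp, fun V _ _ ρ v Λ h => ?_⟩
      simp [h.1 a b hab n hn]
    · obtain ⟨p, hp⟩ := exists_poly (l (t M N a a n - algebraMap ℂ (Y M N) (Λ₀ a n)))
      refine ⟨(MvPolynomial.X (a, n - 1) - MvPolynomial.C (Λ₀ a n)) * p, ?_, ?_⟩
      · simp [evalW, Nat.sub_add_cancel hn]
      · intro V _ _ ρ v Λ h
        convert Submodule.smul_mem _ (Λ a n - Λ₀ a n) (hp V ρ v Λ h) using 1
        simp only [id, smul_eq_mul, map_mul, Module.End.mul_apply, map_sub, LinearMap.sub_apply,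
          h.2 a n hn, AlgHom.commutes, Module.algebraMap_end_apply, ← sub_smul, map_smul, smul_sub,
          smul_smul]
        simp [evalW, Nat.sub_add_cancel hn]
  choose! p hp0 hp using hterm
  refine ⟨∑ x ∈ l.support, p x, by rw [map_sum]; exact Finset.sum_eq_zero hp0,
    fun V _ _ ρ v Λ h => ?_⟩
  convert Submodule.sum_mem _ fun x hx => hp x hx V ρ v Λ h using 1
  rw [Finset.sum_sub_distrib, map_sum, map_sum, LinearMap.sum_apply, Finset.sum_smul]

end

section

/-! ### Super-oscillators and their Fock spaces -/

/-- Annihilation operators `c` and creation operators `d` obeying the canonical super-commutation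
relations, the mode `i` being bosonic or fermionic according to the parity of `p i`. -/
structure Osc {ι : Type*} [DecidableEq ι] (p : ι → ℕ) {V : Type*} [AddCommGroup V] [Module ℂ V]
    (c d : ι → Module.End ℂ V) : Prop where
  cc : ∀ i j, c i * c j = (-1 : ℂ) ^ (p i * p j) • (c j * c i)
  dd : ∀ i j, d i * d j = (-1 : ℂ) ^ (p i * p j) • (d j * d i)
  cd : ∀ i j, c i * d j = (-1 : ℂ) ^ (p i * p j) • (d j * c i) + if i = j then 1 else 0

/-- Fock spaces with an operator `P` recording the parity of the number of fermions. -/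
def HasFock {ι : Type} [DecidableEq ι] (p : ι → ℕ) : Prop :=
  ∃ (V : Type) (_ : AddCommGroup V) (_ : Module ℂ V) (c d : ι → Module.End ℂ V)
    (P : Module.End ℂ V) (v : V), Osc p c d ∧ (∀ x, P (P x) = x) ∧
    (∀ i, P * c i = (-1 : ℂ) ^ p i • (c i * P)) ∧ (∀ i, P * d i = (-1 : ℂ) ^ p i • (d i * P)) ∧
    v ≠ 0 ∧ ∀ i, c i v = 0

lemma HasFock.boson {ι : Type} [DecidableEq ι] (p : Option ι → ℕ) (h0 : p none = 0)
    (h : HasFock fun i => p (some i)) : HasFock p := by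
  obtain ⟨V, _, _, c, d, P, v, hO, hP, hPc, hPd, hv, hcv⟩ := h
  let cn : Module.End ℂ (ℕ → V) :=
    { toFun := fun f n => ((n : ℂ) + 1) • f (n + 1)
      map_add' := fun f g => by ext n; simp
      map_smul' := fun a f => by ext n; simp [smul_comm a] }
  let dn : Module.End ℂ (ℕ → V) :=
    { toFun := fun f n => if n = 0 then 0 else f (n - 1)
      map_add' := fun f g => by ext n; by_cases h : n = 0 <;> simp [h]
      map_smul' := fun a f => by ext n; by_cases h : n = 0 <;> simp [h] }
  have cn_ap : ∀ f n, cn f n = ((n : ℂ) + 1) • f (n + 1) := fun _ _ => rfl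
  have dn_ap : ∀ f n, dn f n = if n = 0 then 0 else f (n - 1) := fun _ _ => rfl
  have cc := fun i j x => LinearMap.congr_fun (hO.cc i j) x
  have dd := fun i j x => LinearMap.congr_fun (hO.dd i j) x
  have cd := fun i j x => LinearMap.congr_fun (hO.cd i j) x
  have pc := fun i x => LinearMap.congr_fun (hPc i) x
  have pd := fun i x => LinearMap.congr_fun (hPd i) x
  simp only [Module.End.mul_apply, LinearMap.smul_apply, LinearMap.add_apply] at cc dd cd pc pd
  refine ⟨ℕ → V, inferInstance, inferInstance,
    fun o => o.elim cn fun i => (c i).compLeft ℕ, fun o => o.elim dn fun i => (d i).compLeft ℕ,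
    P.compLeft ℕ, fun n => if n = 0 then v else 0, ⟨?_, ?_, ?_⟩, ?_, ?_, ?_, ?_, ?_⟩
  · rintro (_ | i) (_ | j) <;> refine LinearMap.ext fun f => funext fun n => ?_
    · simp [h0]
    · simp [h0, cn_ap]
    · simp [h0, cn_ap]
    · exact cc i j (f n)
  · rintro (_ | i) (_ | j) <;> refine LinearMap.ext fun f => funext fun n => ?_
    · simp [h0]
    · by_cases hn : n = 0 <;> simp [h0, dn_ap, hn]
    · by_cases hn : n = 0 <;> simp [h0, dn_ap, hn]
    · exact dd i j (f n)
  · rintro (_ | i) (_ | j) <;> refine LinearMap.ext fun f => funext fun n => ?_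
    · rcases n with _ | n
      · simp [h0, cn_ap, dn_ap]
      · simp [h0, cn_ap, dn_ap, add_smul]
    · by_cases hn : n = 0 <;> simp [h0, cn_ap, hn]
    · by_cases hn : n = 0 <;> simp [h0, dn_ap, hn]
    · by_cases hij : i = j <;> simp [cd, hij]
  · intro x; ext n; simp [hP]
  · rintro (_ | i) <;> refine LinearMap.ext fun f => funext fun n => ?_
    · simp [h0, cn_ap]
    · simp [pc]
  · rintro (_ | i) <;> refine LinearMap.ext fun f => funext fun n => ?_
    · by_cases hn : n = 0 <;> simp [h0, dn_ap, hn]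
    · simp [pd]
  · intro h; exact hv (by simpa using congrFun h 0)
  · rintro (_ | i) <;> refine funext fun n => ?_
    · simp [cn_ap]
    · by_cases hn : n = 0 <;> simp [hn, hcv]

lemma HasFock.fermion {ι : Type} [DecidableEq ι] (p : Option ι → ℕ)
    (h0 : p none = 1) (h : HasFock fun i => p (some i)) : HasFock p := by
  obtain ⟨V, _, _, c, d, P, v, hO, hP, hPc, hPd, hv, hcv⟩ := h
  let cn : Module.End ℂ (V × V) :=
    { toFun := fun f => (P f.2, 0)
      map_add' := fun f g => by simp
      map_smul' := fun a f => by simp }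
  let dn : Module.End ℂ (V × V) :=
    { toFun := fun f => (0, P f.1)
      map_add' := fun f g => by simp
      map_smul' := fun a f => by simp }
  have cn_ap : ∀ f, cn f = (P f.2, 0) := fun _ => rfl
  have dn_ap : ∀ f, dn f = (0, P f.1) := fun _ => rfl
  have cc := fun i j x => LinearMap.congr_fun (hO.cc i j) x
  have dd := fun i j x => LinearMap.congr_fun (hO.dd i j) x
  have cd := fun i j x => LinearMap.congr_fun (hO.cd i j) x
  have pc := fun i x => LinearMap.congr_fun (hPc i) x
  have pd := fun i x => LinearMap.congr_fun (hPd i) x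
  have sq : ∀ (n : ℕ) (x : V), (-1 : ℂ) ^ n • (-1 : ℂ) ^ n • x = x := fun n x => by
    rw [smul_smul, ← mul_pow]; simp
  simp only [Module.End.mul_apply, LinearMap.smul_apply, LinearMap.add_apply] at cc dd cd pc pd
  refine ⟨V × V, inferInstance, inferInstance,
    fun o => o.elim cn fun i => (c i).prodMap (c i),
    fun o => o.elim dn fun i => (d i).prodMap (d i),
    P.prodMap (-P), (v, 0), ⟨?_, ?_, ?_⟩, ?_, ?_, ?_, ?_, ?_⟩
  · rintro (_ | i) (_ | j) <;> refine LinearMap.ext fun f => ?_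
    · simp [h0, cn_ap]
    · simp [h0, cn_ap, pc]
    · simp [h0, cn_ap, pc, sq]
    · exact Prod.ext (cc i j f.1) (cc i j f.2)
  · rintro (_ | i) (_ | j) <;> refine LinearMap.ext fun f => ?_
    · simp [h0, dn_ap]
    · simp [h0, dn_ap, pd]
    · simp [h0, dn_ap, pd, sq]
    · exact Prod.ext (dd i j f.1) (dd i j f.2)
  · rintro (_ | i) (_ | j) <;> refine LinearMap.ext fun f => ?_
    · refine Prod.ext ?_ ?_ <;> simp [h0, cn_ap, dn_ap, hP]
    · simp [h0, cn_ap, pd]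
    · simp [h0, dn_ap, pc, sq]
    · refine Prod.ext ?_ ?_ <;> by_cases hij : i = j <;> simp [cd, hij]
  · intro x; simp [hP]
  · rintro (_ | i) <;> refine LinearMap.ext fun f => ?_
    · simp [h0, cn_ap]
    · simp [pc]
  · rintro (_ | i) <;> refine LinearMap.ext fun f => ?_
    · simp [h0, dn_ap]
    · simp [pd]
  · intro h; exact hv (by simpa using congrArg Prod.fst h)
  · rintro (_ | i)
    · simp [cn_ap]
    · simp [hcv]

lemma hasFock (ι : Type) [Finite ι] : ∀ [DecidableEq ι] (p : ι → ℕ)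
    (_ : ∀ i, p i = 0 ∨ p i = 1), HasFock p := by
  induction ι using Finite.induction_empty_option with
  | of_equiv e ih =>
    classical
    intro _ p hp
    obtain ⟨V, _, _, c, d, P, v, hO, hP, hPc, hPd, hv, hcv⟩ :=
      ih (fun i => p (e i)) fun i => hp _
    refine ⟨V, inferInstance, inferInstance, fun i => c (e.symm i), fun i => d (e.symm i), P, v,
      ⟨fun i j => ?_, fun i j => ?_, fun i j => ?_⟩, hP, fun i => ?_, fun i => ?_, hv, fun i => hcv _⟩
    · simpa using hO.cc (e.symm i) (e.symm j)
    · simpa using hO.dd (e.symm i) (e.symm j)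
    · simpa using hO.cd (e.symm i) (e.symm j)
    · simpa using hPc (e.symm i)
    · simpa using hPd (e.symm i)
  | h_empty =>
    intro _ p _
    exact ⟨ℂ, inferInstance, inferInstance, PEmpty.elim, PEmpty.elim, 1, 1,
      ⟨fun i => i.elim, fun i => i.elim, fun i => i.elim⟩, fun x => rfl, fun i => i.elim,
      fun i => i.elim, one_ne_zero, fun i => i.elim⟩
  | h_option ih =>
    classical
    intro inst p hp
    obtain rfl : inst = Classical.decEq _ := Subsingleton.elim _ _
    have := ih (fun i => p (some i)) fun i => hp _
    rcases hp none with h | h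
    · convert HasFock.boson p h this
    · convert HasFock.fermion p h this

lemma neg_one_pow_sq_smul {W : Type*} [AddCommGroup W] [Module ℂ W] (n : ℕ) (x : W) :
    (-1 : ℂ) ^ n • (-1 : ℂ) ^ n • x = x := by
  rw [smul_smul, ← mul_pow]; simp

/-- Particle-hole transformation on the set `fill` of modes: creation and annihilation operators
are exchanged, up to the sign that restores the super-commutation relations. -/
lemma Osc.fill {ι : Type*} [DecidableEq ι] {p : ι → ℕ} {V : Type*} [AddCommGroup V] [Module ℂ V]
    {c d : ι → Module.End ℂ V} (h : Osc p c d) (hp : ∀ i, p i = 0 ∨ p i = 1)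
    (fill : ι → Prop) [DecidablePred fill] :
    Osc p (fun i => if fill i then d i else c i)
      (fun i => if fill i then (-(-1 : ℂ) ^ p i) • c i else d i) := by
  have dc : ∀ i j, i ≠ j → d i * c j = (-1 : ℂ) ^ (p i * p j) • (c j * d i) := by
    intro i j hij
    rw [h.cd j i, if_neg (Ne.symm hij), add_zero, mul_comm (p j), neg_one_pow_sq_smul]
  have dcs : ∀ i, d i * c i = (-1 : ℂ) ^ (p i * p i) • (c i * d i) - (-1 : ℂ) ^ (p i) • 1 := by
    intro i
    have hpp : p i * p i = p i := by rcases hp i with h | h <;> simp [h]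
    rw [h.cd i i, if_pos rfl, smul_add, neg_one_pow_sq_smul, hpp]
    abel
  refine ⟨fun i j => ?_, fun i j => ?_, fun i j => ?_⟩
  · by_cases hi : fill i <;> by_cases hj : fill j <;> simp only [hi, hj, if_true, if_false]
    · exact h.dd i j
    · exact dc i j (by rintro rfl; exact hj hi)
    · rw [h.cd, if_neg (by rintro rfl; exact hi hj), add_zero]
    · exact h.cc i j
  · by_cases hi : fill i <;> by_cases hj : fill j <;> simp only [hi, hj, if_true, if_false]
    · rw [smul_mul_smul_comm, smul_mul_smul_comm, h.cc i j, mul_comm (-(-1 : ℂ) ^ p i),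
        smul_comm]
    · rw [smul_mul_assoc, mul_smul_comm, h.cd, if_neg (by rintro rfl; exact hj hi), add_zero,
        smul_comm]
    · rw [smul_mul_assoc, mul_smul_comm, dc i j (by rintro rfl; exact hi hj), smul_comm]
    · exact h.dd i j
  · by_cases hi : fill i <;> by_cases hj : fill j <;> simp only [hi, hj, if_true, if_false]
    · by_cases hij : i = j
      · subst hij
        rw [if_pos rfl, mul_smul_comm, smul_mul_assoc, dcs, smul_sub, smul_smul _ _ (1 : Module.End ℂ V)]
        have : -(-1 : ℂ) ^ p i * (-1) ^ p i = -1 := by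
          rw [neg_mul, ← mul_pow]; simp
        rw [this, neg_one_smul, sub_neg_eq_add, smul_comm]
      · rw [if_neg hij, mul_smul_comm, smul_mul_assoc, dc i j hij, add_zero, smul_comm]
    · rw [h.dd, if_neg (by rintro rfl; exact hj hi), add_zero]
    · rw [mul_smul_comm, smul_mul_assoc, h.cc, if_neg (by rintro rfl; exact hi hj), add_zero,
        smul_comm]
    · exact h.cd i j

/-! ### Representations of `gl(M|N)` on Fock spaces -/

lemma pa_cases (M : ℕ) {k : ℕ} (a : Fin k) : pa M a = 0 ∨ pa M a = 1 := by
  unfold pa; split_ifs <;> simp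

/-- The bilinears `d_a c_b` in super-oscillators satisfy the relations of `gl(M|N)`, and bilinears
built from different species supercommute. -/
lemma Osc.bilinear {n : ℕ} (M : ℕ) {κ : Type*} [DecidableEq κ] {V : Type*} [AddCommGroup V]
    [Module ℂ V] {c d : Fin n × κ → Module.End ℂ V} (h : Osc (fun x => pa M x.1) c d)
    (a b a' b' : Fin n) (i j : κ) :
    (d (a, i) * c (b, i)) * (d (a', j) * c (b', j))
      = sgn1 M a b a' b' • ((d (a', j) * c (b', j)) * (d (a, i) * c (b, i)))
        + if i = j then (if b = a' then d (a, i) * c (b', i) else 0)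
          - sgn1 M a b a' b' • (if b' = a then d (a', i) * c (b, i) else 0) else 0 := by
  have e1 : (d (a, i) * c (b, i)) * (d (a', j) * c (b', j))
      = (-1 : ℂ) ^ (pa M b * pa M a') • (d (a, i) * d (a', j) * (c (b, i) * c (b', j)))
        + (if (b, i) = (a', j) then d (a, i) * c (b', j) else 0) := by
    rw [mul_assoc, ← mul_assoc (c (b, i)), h.cd]
    split_ifs <;> simp [add_mul, mul_add, mul_assoc]
  have e2 : (d (a', j) * c (b', j)) * (d (a, i) * c (b, i))
      = (-1 : ℂ) ^ (pa M b' * pa M a) • (d (a', j) * d (a, i) * (c (b', j) * c (b, i)))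
        + (if (b', j) = (a, i) then d (a', j) * c (b, i) else 0) := by
    rw [mul_assoc, ← mul_assoc (c (b', j)), h.cd]
    split_ifs <;> simp [add_mul, mul_add, mul_assoc]
  rw [e1, e2, h.dd (a, i) (a', j), h.cc (b, i) (b', j), smul_add]
  simp only [smul_mul_assoc, mul_smul_comm, smul_smul]
  have hs : sgn1 M a b a' b' * (-1 : ℂ) ^ (pa M b' * pa M a)
      = (-1 : ℂ) ^ (pa M b * pa M a') * (-1) ^ (pa M b * pa M b') * (-1) ^ (pa M a * pa M a') := by
    unfold sgn1
    rcases pa_cases M a with h1 | h1 <;> rcases pa_cases M b with h2 | h2 <;>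
    rcases pa_cases M a' with h3 | h3 <;> rcases pa_cases M b' with h4 | h4 <;>
    norm_num [h1, h2, h3, h4]
  rw [hs]
  simp only [Prod.mk.injEq]
  by_cases hij : i = j
  · subst hij
    simp only [and_true, if_true]
    split_ifs <;> module
  · simp only [hij, Ne.symm hij, and_false, if_false]
    module

/-- Supercommuting representations of `gl(M|N)`, indexed by `s : S`, with a common maximal vector; the
weight of the `s`-th one is `-k s` (up to parity signs) on the indices `a ≤ β s`, and zero on the
remaining ones. -/
lemma exists_gl (M n : ℕ) {S : Type} [Finite S] [DecidableEq S] (k : S → ℕ) (β : S → Fin n) :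
    ∃ (V : Type) (_ : AddCommGroup V) (_ : Module ℂ V) (E : S → Fin n → Fin n → Module.End ℂ V)
      (v : V), v ≠ 0 ∧
      (∀ s s' a b a' b', E s a b * E s' a' b' = sgn1 M a b a' b' • (E s' a' b' * E s a b)
        + if s = s' then (if b = a' then E s a b' else 0)
          - sgn1 M a b a' b' • (if b' = a then E s a' b else 0) else 0) ∧
      (∀ s a b, a < b → E s a b v = 0) ∧
      (∀ s a, E s a a v = (if a ≤ β s then -(-1 : ℂ) ^ pa M a * k s else 0) • v) := by
  classical
  let p : Fin n × (Σ s, Fin (k s)) → ℕ := fun x => pa M x.1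
  have hp : ∀ i, p i = 0 ∨ p i = 1 := fun i => pa_cases M _
  obtain ⟨V, _, _, c₀, d₀, P, v, hO, -, -, -, hv, hcv⟩ := hasFock _ p hp
  let fill : Fin n × (Σ s, Fin (k s)) → Prop := fun x => x.1 ≤ β x.2.1
  have h := hO.fill hp fill
  set c := fun i => if fill i then d₀ i else c₀ i with hc
  set d := fun i => if fill i then (-(-1 : ℂ) ^ p i) • c₀ i else d₀ i with hd
  have hc0 : ∀ x, ¬ fill x → c x v = 0 := fun x hx => by simp [hc, hx, hcv]
  have hd0 : ∀ x, fill x → d x v = 0 := fun x hx => by simp [hd, hx, hcv]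
  have hdc : ∀ x y, x ≠ y → d x * c y = (-1 : ℂ) ^ (p x * p y) • (c y * d x) := by
    intro x y hxy
    rw [h.cd y x, if_neg (Ne.symm hxy), add_zero, mul_comm (p y), neg_one_pow_sq_smul]
  refine ⟨V, inferInstance, inferInstance,
    fun s a b => ∑ i : Fin (k s), d (a, ⟨s, i⟩) * c (b, ⟨s, i⟩), v, hv, ?_, ?_, ?_⟩
  · intro s s' a b a' b'
    have hb := h.bilinear M a b a' b'
    rw [Finset.sum_mul_sum, Finset.sum_mul_sum, Finset.sum_comm, Finset.smul_sum]
    simp only [Finset.smul_sum]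
    simp only [hb, Finset.sum_add_distrib]
    congr 1
    by_cases hs : s = s'
    · subst hs
      simp only [if_true, Sigma.mk.injEq, heq_eq_eq, true_and, Finset.sum_ite_eq', Finset.mem_univ,
        Finset.sum_sub_distrib]
      congr 1
      · by_cases h1 : b = a' <;> simp [h1]
      · by_cases h1 : b' = a <;> simp [h1, Finset.smul_sum]
    · simp [hs]
  · intro s a b hab
    simp only [LinearMap.sum_apply, Module.End.mul_apply]
    refine Finset.sum_eq_zero fun i _ => ?_
    by_cases hf : fill (b, ⟨s, i⟩)
    · have hfa : fill (a, ⟨s, i⟩) := hab.le.trans hf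
      rw [← Module.End.mul_apply, hdc _ _ (by simp [hab.ne])]
      simp [hd0 _ hfa]
    · rw [hc0 _ hf, map_zero]
  · intro s a
    simp only [LinearMap.sum_apply, Module.End.mul_apply]
    have : ∀ i : Fin (k s), d (a, ⟨s, i⟩) (c (a, ⟨s, i⟩) v)
        = (if a ≤ β s then -(-1 : ℂ) ^ pa M a else 0) • v := by
      intro i
      by_cases hf : fill (a, ⟨s, i⟩)
      · have h1 := LinearMap.congr_fun (h.cd (a, ⟨s, i⟩) (a, ⟨s, i⟩)) v
        have hpp : p (a, ⟨s, i⟩) * p (a, ⟨s, i⟩) = pa M a := by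
          rcases pa_cases M a with h | h <;> simp [p, h]
        simp only [Module.End.mul_apply, LinearMap.add_apply, LinearMap.smul_apply, if_true, hpp,
          hd0 _ hf, map_zero, Module.End.one_apply] at h1
        have h2 : a ≤ β s := hf
        have h3 := congrArg (fun x => (-1 : ℂ) ^ pa M a • x) h1
        simp only [smul_zero, smul_add, neg_one_pow_sq_smul] at h3
        rw [if_pos h2, neg_smul]
        exact eq_neg_of_add_eq_zero_left h3.symm
      · have h2 : ¬ a ≤ β s := hf
        rw [hc0 _ hf, map_zero, if_neg h2, zero_smul]
    simp only [this, Finset.sum_const, Finset.card_univ, Fintype.card_fin]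
    rw [← Nat.cast_smul_eq_nsmul ℂ, smul_smul]
    by_cases h2 : a ≤ β s <;> simp [h2, mul_comm]

end

section

/-! ### Products of solutions of the RTT relation -/

section Coproduct

variable {n : ℕ} {B : Type*} [Ring B] [Algebra ℂ B]

lemma rtt_term (α β : B) (hα : ∀ b, α * b = b * α) (hβ : ∀ b, β * b = b * β)
    (p q p2 q2 q3 p3 p' q' p2' q2' q3' p3' : B) (θ₁ σ₁ θ₂ σ₂ : ℂ)
    (h : α * (p * q - θ₁ • (q * p)) = β * (σ₁ • (p2 * q2 - q3 * p3)))
    (h' : α * (p' * q' - θ₂ • (q' * p')) = β * (σ₂ • (p2' * q2' - q3' * p3'))) :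
    α * (p * q * (p' * q')) = (θ₁ * θ₂) • (α * (q * p * (q' * p')))
      + σ₁ • (β * (p2 * q2 * (p' * q'))) - σ₁ • (β * (q3 * p3 * (p' * q')))
      + (θ₁ * σ₂) • (β * (q * p * (p2' * q2'))) - (θ₁ * σ₂) • (β * (q * p * (q3' * p3'))) := by
  have e1 : α * (p * q) = θ₁ • (α * (q * p)) + σ₁ • (β * (p2 * q2)) - σ₁ • (β * (q3 * p3)) := by
    simp only [mul_sub, mul_smul_comm, smul_sub] at h
    rw [sub_eq_iff_eq_add] at h
    rw [h]; abel
  have e2 : α * (p' * q') = θ₂ • (α * (q' * p')) + σ₂ • (β * (p2' * q2'))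
      - σ₂ • (β * (q3' * p3')) := by
    simp only [mul_sub, mul_smul_comm, smul_sub] at h'
    rw [sub_eq_iff_eq_add] at h'
    rw [h']; abel
  have c1 : ∀ x y, α * x * y = x * (α * y) := fun x y => by rw [hα, mul_assoc]
  have c2 : ∀ x y, x * (β * y) = β * (x * y) := fun x y => by rw [← mul_assoc, ← hβ, mul_assoc]
  have c3 : ∀ x y, x * (α * y) = α * (x * y) := fun x y => by rw [← mul_assoc, ← hα, mul_assoc]
  rw [← mul_assoc, e1]
  simp only [sub_mul, add_mul, smul_mul_assoc]
  rw [c1, e2, mul_assoc β, mul_assoc β]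
  simp only [mul_sub, mul_add, mul_smul_comm, c2, c3]
  module

/-- The comultiplication of the super Yangian: the matrix product of two solutions of the RTT
relation whose entries supercommute with each other is again a solution. -/
lemma rtt_mul (M : ℕ) (α β : B) (hα : ∀ b, α * b = b * α) (hβ : ∀ b, β * b = b * β)
    (P Q P' Q' : Matrix (Fin n) (Fin n) B)
    (H : ∀ i j k l, α * (P i j * Q k l - sgn1 M i j k l • (Q k l * P i j))
      = β * (sgn2 M i j k • (P k j * Q i l - Q k j * P i l)))
    (H' : ∀ i j k l, α * (P' i j * Q' k l - sgn1 M i j k l • (Q' k l * P' i j))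
      = β * (sgn2 M i j k • (P' k j * Q' i l - Q' k j * P' i l)))
    (hPQ : ∀ i j k l, P' i j * Q k l = sgn1 M i j k l • (Q k l * P' i j))
    (hQP : ∀ i j k l, Q' i j * P k l = sgn1 M i j k l • (P k l * Q' i j))
    (i j k l : Fin n) :
    α * ((P * P') i j * (Q * Q') k l
        - sgn1 M i j k l • ((Q * Q') k l * (P * P') i j))
      = β * (sgn2 M i j k • ((P * P') k j * (Q * Q') i l
        - (Q * Q') k j * (P * P') i l)) := by
  have ePQ : ∀ i j k l, (P * P') i j * (Q * Q') k l = ∑ a, ∑ c,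
      sgn1 M a j k c •
        (P i a * Q k c * (P' a j * Q' c l)) := by
    intro i j k l
    simp only [Matrix.mul_apply]
    rw [Finset.sum_mul_sum]
    refine Finset.sum_congr rfl fun a _ => Finset.sum_congr rfl fun c _ => ?_
    rw [mul_assoc (P i a), ← mul_assoc (P' a j), hPQ]
    simp only [smul_mul_assoc, mul_smul_comm, mul_assoc]
  have eQP : ∀ i j k l, (Q * Q') k l * (P * P') i j = ∑ a, ∑ c,
      sgn1 M c l i a •
        (Q k c * P i a * (Q' c l * P' a j)) := by
    intro i j k l
    simp only [Matrix.mul_apply]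
    rw [Finset.sum_mul_sum, Finset.sum_comm]
    refine Finset.sum_congr rfl fun a _ => Finset.sum_congr rfl fun c _ => ?_
    rw [mul_assoc (Q k c), ← mul_assoc (Q' c l), hQP]
    simp only [smul_mul_assoc, mul_smul_comm, mul_assoc]
  rw [ePQ, eQP, ePQ, eQP i l k j]
  let X : Fin n → Fin n → B := fun a c =>
    (sgn1 M a j k c * sgn2 M i a k) •
      (β * (Q k a * P i c * (P' a j * Q' c l)))
  have hX : ∑ a, ∑ c, (X c a - X a c) = 0 := by
    simp only [Finset.sum_sub_distrib]
    rw [Finset.sum_comm, sub_self]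
  rw [← sub_eq_zero, ← hX]
  simp only [mul_sub, mul_smul_comm, Finset.mul_sum, Finset.smul_sum, smul_sub]
  simp only [← Finset.sum_sub_distrib]
  refine Finset.sum_congr rfl fun a _ => Finset.sum_congr rfl fun c _ => ?_
  have s1 : sgn1 M i j k l * sgn1 M c l i a
      = sgn1 M a j k c * (sgn1 M i a k c * sgn1 M a j c l) := by
    unfold sgn1
    rcases pa_cases M i with h1 | h1 <;> rcases pa_cases M j with h2 | h2 <;>
    rcases pa_cases M k with h3 | h3 <;> rcases pa_cases M l with h4 | h4 <;>
    rcases pa_cases M a with h5 | h5 <;> rcases pa_cases M c with h6 | h6 <;>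
    simp only [h1, h2, h3, h4, h5, h6] <;> norm_num
  have s2 : sgn2 M i j k * sgn1 M a j i c
      = sgn1 M a j k c * sgn2 M i a k := by
    unfold sgn1 sgn2
    rcases pa_cases M i with h1 | h1 <;> rcases pa_cases M j with h2 | h2 <;>
    rcases pa_cases M k with h3 | h3 <;>
    rcases pa_cases M a with h5 | h5 <;> rcases pa_cases M c with h6 | h6 <;>
    simp only [h1, h2, h3, h5, h6] <;> norm_num
  have s3 : sgn2 M i j k * sgn1 M c j i a
      = sgn1 M a j k c * (sgn1 M i a k c * sgn2 M a j c) := by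
    unfold sgn1 sgn2
    rcases pa_cases M i with h1 | h1 <;> rcases pa_cases M j with h2 | h2 <;>
    rcases pa_cases M k with h3 | h3 <;>
    rcases pa_cases M a with h5 | h5 <;> rcases pa_cases M c with h6 | h6 <;>
    simp only [h1, h2, h3, h5, h6] <;> norm_num
  have s4 : sgn1 M c j k a * sgn2 M i c k
      = sgn1 M a j k c * (sgn1 M i a k c * sgn2 M a j c) := by
    unfold sgn1 sgn2
    rcases pa_cases M i with h1 | h1 <;> rcases pa_cases M j with h2 | h2 <;>
    rcases pa_cases M k with h3 | h3 <;>
    rcases pa_cases M a with h5 | h5 <;> rcases pa_cases M c with h6 | h6 <;>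
    simp only [h1, h2, h3, h5, h6] <;> norm_num
  simp only [X]
  rw [rtt_term α β hα hβ _ _ _ _ _ _ _ _ _ _ _ _ _ _ _ _ (H i a k c) (H' a j c l),
    s4, smul_smul, smul_smul, smul_smul, s1, s2, s3]
  module

end Coproduct

end

section

/-! ### Monodromy matrices -/

section Monodromy

variable {n : ℕ} {B : Type*} [Ring B] [Algebra ℂ B]

/-- The elementary solution `1 + x e` of the RTT relation attached to a representation `e` of
`gl(M|N)`. -/
lemma rtt_elem (M : ℕ) (x y : B) (hx : ∀ b, x * b = b * x) (hy : ∀ b, y * b = b * y)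
    (e : Fin n → Fin n → B)
    (he : ∀ i j k l, e i j * e k l = sgn1 M i j k l • (e k l * e i j)
      + sgn2 M i j k • ((if k = j then e i l else 0) - if i = l then e k j else 0))
    (i j k l : Fin n) :
    (y - x) * (((1 : Matrix (Fin n) (Fin n) B) i j + x * e i j) *
        ((1 : Matrix (Fin n) (Fin n) B) k l + y * e k l)
        - sgn1 M i j k l • (((1 : Matrix (Fin n) (Fin n) B) k l + y * e k l) *
          ((1 : Matrix (Fin n) (Fin n) B) i j + x * e i j)))
      = (y * x) * (sgn2 M i j k • (((1 : Matrix (Fin n) (Fin n) B) k j + x * e k j) *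
          ((1 : Matrix (Fin n) (Fin n) B) i l + y * e i l)
        - ((1 : Matrix (Fin n) (Fin n) B) k j + y * e k j) *
          ((1 : Matrix (Fin n) (Fin n) B) i l + x * e i l))) := by
  have cx : ∀ i j b, e i j * (x * b) = x * (e i j * b) := fun i j b => by
    rw [← mul_assoc, ← hx, mul_assoc]
  have cy : ∀ i j b, e i j * (y * b) = y * (e i j * b) := fun i j b => by
    rw [← mul_assoc, ← hy, mul_assoc]
  have cxy : ∀ b, x * (y * b) = y * (x * b) := fun b => by
    rw [← mul_assoc, ← hy, mul_assoc]
  have h1 : i = j → sgn1 M i j k l = 1 := by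
    rintro rfl; unfold sgn1; rw [Even.neg_one_pow]; exact (Even.add_self _).mul_right _
  have h2 : k = l → sgn1 M i j k l = 1 := by
    rintro rfl; unfold sgn1; rw [Even.neg_one_pow]; exact (Even.add_self _).mul_left _
  have hA : ((1 : Matrix (Fin n) (Fin n) B) i j + x * e i j) *
        ((1 : Matrix (Fin n) (Fin n) B) k l + y * e k l)
        - sgn1 M i j k l • (((1 : Matrix (Fin n) (Fin n) B) k l + y * e k l) *
          ((1 : Matrix (Fin n) (Fin n) B) i j + x * e i j))
      = y * (x * (sgn2 M i j k • ((if k = j then e i l else 0) - if i = l then e k j else 0))) := by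
    have : y * (x * (e i j * e k l)) - sgn1 M i j k l • (y * (x * (e k l * e i j)))
        = y * (x * (sgn2 M i j k • ((if k = j then e i l else 0) - if i = l then e k j else 0))) := by
      rw [he i j k l]
      simp only [mul_add, mul_smul_comm]
      abel
    rw [← this]
    simp only [Matrix.one_apply]
    by_cases hij : i = j
    · by_cases hkl : k = l
      · rw [if_pos hij, if_pos hkl, h1 hij]
        simp only [one_smul, mul_add, add_mul, mul_one, one_mul, mul_assoc, cx, cy, cxy]
        abel
      · rw [if_pos hij, if_neg hkl, h1 hij]
        simp only [one_smul, mul_add, add_mul, mul_one, one_mul, mul_assoc, cx, cy, cxy, zero_add]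
        abel
    · by_cases hkl : k = l
      · rw [if_neg hij, if_pos hkl, h2 hkl]
        simp only [one_smul, mul_add, add_mul, mul_one, one_mul, mul_assoc, cx, cy, cxy, zero_add]
        abel
      · simp only [hij, hkl, if_false, mul_assoc, cx, cy, cxy, zero_add]
  rw [hA]
  simp only [Matrix.one_apply, eq_comm (a := k) (b := j)]
  split_ifs <;>
    simp only [sub_mul, mul_sub, mul_add, add_mul, mul_smul_comm, mul_assoc, cx, cy, cxy, one_mul,
      mul_one, mul_zero, smul_zero, sub_zero, zero_add, sub_self, zero_sub,
      smul_sub, smul_add, mul_neg, smul_neg] <;>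
    abel

open PowerSeries

variable {A : Type*} [Ring A]

lemma coeff_two_mul (f g : A⟦X⟧) (p q : ℕ) :
    coeff q (coeff p (map C f * C g)) = coeff p f * coeff q g := by
  rw [coeff_mul_C, coeff_map, coeff_C_mul]

lemma coeff_two_mul' (f g : A⟦X⟧) (p q : ℕ) :
    coeff q (coeff p (C g * map C f)) = coeff q g * coeff p f := by
  rw [coeff_C_mul, coeff_map, coeff_mul_C]

lemma X_central (b : A⟦X⟧) : X * b = b * X := (commute_X b).symm

lemma CX_central (b : A⟦X⟧⟦X⟧) : C (X : A⟦X⟧) * b = b * C X := by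
  ext p : 1
  rw [coeff_C_mul, coeff_mul_C, X_central]

variable [Algebra ℂ A]

/-- The RTT relation `(y - x)[T_ij(x), T_kl(y)} = xy (-1)^{…} (T_kj(x) T_il(y) - T_kj(y) T_il(x))`
for a matrix of power series, as an identity in `A⟦y⟧⟦x⟧`. -/
def IsRTT (M : ℕ) (T : Matrix (Fin n) (Fin n) A⟦X⟧) : Prop :=
  ∀ i j k l, (C (X : A⟦X⟧) - X) * (map C (T i j) * C (T k l)
      - sgn1 M i j k l • (C (T k l) * map C (T i j)))
    = (C (X : A⟦X⟧) * X) * (sgn2 M i j k • (map C (T k j) * C (T i l)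
      - C (T k j) * map C (T i l)))

/-- The coefficients of the entries of `T` supercommute with those of `T'`. -/
def SuperComm (M : ℕ) (T T' : Matrix (Fin n) (Fin n) A⟦X⟧) : Prop :=
  ∀ i j k l p q, coeff p (T i j) * coeff q (T' k l)
    = sgn1 M i j k l • (coeff q (T' k l) * coeff p (T i j))

lemma IsRTT.mul (M : ℕ) {T T' : Matrix (Fin n) (Fin n) A⟦X⟧} (h : IsRTT M T) (h' : IsRTT M T')
    (hs : SuperComm M T' T) : IsRTT M (T * T') := by
  intro i j k l
  have := rtt_mul M (C (X : A⟦X⟧) - X) (C (X : A⟦X⟧) * X)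
    (fun b => by rw [sub_mul, mul_sub, CX_central, X_central])
    (fun b => by rw [mul_assoc, X_central, ← mul_assoc, CX_central, mul_assoc])
    (T.map (map C)) (T.map C) (T'.map (map C)) (T'.map C) h h'
    (fun i j k l => by
      ext p q
      simp only [Matrix.map_apply, coeff_smul, coeff_two_mul, coeff_two_mul', hs i j k l p q])
    (fun i j k l => by
      ext p q
      simp only [Matrix.map_apply, coeff_smul, coeff_two_mul, coeff_two_mul', hs i j k l q p])
    i j k l
  simp only [← Matrix.map_mul] at this
  exact this

/-- The solution `1 + x e` of the RTT relation. -/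
noncomputable def Lmat (e : Fin n → Fin n → A) : Matrix (Fin n) (Fin n) A⟦X⟧ :=
  fun i j => (1 : Matrix (Fin n) (Fin n) A⟦X⟧) i j + X * C (e i j)

lemma isRTT_Lmat (M : ℕ) (e : Fin n → Fin n → A)
    (he : ∀ i j k l, e i j * e k l = sgn1 M i j k l • (e k l * e i j)
      + sgn2 M i j k • ((if k = j then e i l else 0) - if i = l then e k j else 0)) :
    IsRTT M (Lmat e) := by
  intro i j k l
  have hC : ∀ (z : ℂ) (a : A), (C (C (z • a)) : A⟦X⟧⟦X⟧) = z • C (C a) := by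
    intro z a
    ext p q
    simp only [coeff_smul, coeff_C]
    split_ifs <;> simp [coeff_C]
  have := rtt_elem M (X : A⟦X⟧⟦X⟧) (C X) X_central CX_central (fun i j => C (C (e i j))) (by
    intro i j k l
    rw [← map_mul, ← map_mul, he, map_add, map_add, hC, hC, map_mul, map_mul, map_sub, map_sub]
    split_ifs <;> simp) i j k l
  simpa [Lmat, Matrix.one_apply, apply_ite] using this

lemma isRTT_one (M : ℕ) : IsRTT M (1 : Matrix (Fin n) (Fin n) A⟦X⟧) := by
  have h : Lmat (fun _ _ => 0 : Fin n → Fin n → A) = 1 := by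
    ext i j : 2
    simp [Lmat]
  rw [← h]
  exact isRTT_Lmat M _ (by simp)

end Monodromy

end

section

section Monodromy

open PowerSeries

variable {n : ℕ} {A : Type*} [Ring A]

lemma coeff_Lmat (e : Fin n → Fin n → A) (i j : Fin n) (p : ℕ) :
    coeff p (Lmat e i j)
      = if p = 0 then (1 : Matrix (Fin n) (Fin n) A) i j else if p = 1 then e i j else 0 := by
  have h1 : (1 : Matrix (Fin n) (Fin n) A⟦X⟧) i j = C ((1 : Matrix (Fin n) (Fin n) A) i j) := by
    simp only [Matrix.one_apply]; split_ifs <;> simp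
  rcases p with _ | _ | p
  · simp [Lmat, h1]
  · simp [Lmat, h1]
  · simp [Lmat, h1, coeff_X]

lemma coeff_succ_Lmat_mul (e : Fin n → Fin n → A) (T : Matrix (Fin n) (Fin n) A⟦X⟧)
    (i j : Fin n) (p : ℕ) :
    coeff (p + 1) ((Lmat e * T) i j) = coeff (p + 1) (T i j) + ∑ c, e i c * coeff p (T c j) := by
  have h : (Lmat e * T) i j = T i j + X * ∑ c, C (e i c) * T c j := by
    have : Lmat e = 1 + Matrix.of fun i j => X * C (e i j) := rfl
    rw [this, add_mul, one_mul, Matrix.add_apply, Matrix.mul_apply, Finset.mul_sum]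
    simp [mul_assoc]
  rw [h, map_add, coeff_succ_X_mul, map_sum]
  simp

lemma coeff_zero_Lmat_mul (e : Fin n → Fin n → A) (T : Matrix (Fin n) (Fin n) A⟦X⟧)
    (i j : Fin n) : coeff 0 ((Lmat e * T) i j) = coeff 0 (T i j) := by
  have h : ∀ c, coeff 0 (Lmat e i c) = (1 : Matrix (Fin n) (Fin n) A) i c := fun c => by
    rw [coeff_Lmat, if_pos rfl]
  simp only [coeff_zero_eq_constantCoeff_apply] at h ⊢
  simp [Matrix.mul_apply, h, Matrix.one_apply]

variable [Algebra ℂ A]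

lemma sgn1_eq_one_left (M : ℕ) (i k l : Fin n) : sgn1 M i i k l = 1 := by
  unfold sgn1; rw [Even.neg_one_pow]; exact (Even.add_self _).mul_right _

lemma sgn1_eq_one_right (M : ℕ) (i j k : Fin n) : sgn1 M i j k k = 1 := by
  unfold sgn1; rw [Even.neg_one_pow]; exact (Even.add_self _).mul_left _

lemma superComm_one (M : ℕ) (T : Matrix (Fin n) (Fin n) A⟦X⟧) : SuperComm M 1 T := by
  intro i j k l p q
  by_cases h : i = j
  · subst h
    rw [sgn1_eq_one_left, one_smul, Matrix.one_apply_eq, coeff_one]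
    split_ifs <;> simp
  · simp [Matrix.one_apply_ne h]

lemma superComm_Lmat (M : ℕ) {e e' : Fin n → Fin n → A}
    (h : ∀ i j k l, e i j * e' k l = sgn1 M i j k l • (e' k l * e i j)) :
    SuperComm M (Lmat e) (Lmat e') := by
  intro i j k l p q
  simp only [coeff_Lmat, Matrix.one_apply]
  split_ifs <;> subst_vars <;> simp [sgn1_eq_one_left, sgn1_eq_one_right, h]

lemma SuperComm.mul_left {M : ℕ} {T₁ T₂ T₃ : Matrix (Fin n) (Fin n) A⟦X⟧}
    (h₁ : SuperComm M T₁ T₃) (h₂ : SuperComm M T₂ T₃) : SuperComm M (T₁ * T₂) T₃ := by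
  intro i j k l p q
  simp only [Matrix.mul_apply, map_sum, coeff_mul, Finset.sum_mul, Finset.mul_sum,
    Finset.smul_sum]
  refine Finset.sum_congr rfl fun a _ => Finset.sum_congr rfl fun x _ => ?_
  rw [mul_assoc, h₂, mul_smul_comm, ← mul_assoc, h₁, smul_mul_assoc, smul_smul, mul_assoc]
  congr 1
  unfold sgn1
  rcases pa_cases M i with h1 | h1 <;> rcases pa_cases M j with h2 | h2 <;>
  rcases pa_cases M k with h3 | h3 <;> rcases pa_cases M l with h4 | h4 <;>
  rcases pa_cases M a with h5 | h5 <;>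
  simp only [h1, h2, h3, h4, h5] <;> norm_num

end Monodromy

/-! ### Maximal vectors of monodromy matrices -/

section HighestWeight

open PowerSeries

variable {n : ℕ} {V : Type*} [AddCommGroup V] [Module ℂ V]

/-- `v` is annihilated by the upper triangular entries of `T`, and is an eigenvector of the
diagonal ones, with eigenvalues collected in the power series `f a`. -/
def IsHW (T : Matrix (Fin n) (Fin n) (Module.End ℂ V)⟦X⟧) (v : V) (f : Fin n → ℂ⟦X⟧) : Prop :=
  (∀ a b, a < b → ∀ p, coeff p (T a b) v = 0) ∧ ∀ a p, coeff p (T a a) v = coeff p (f a) • v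

lemma IsHW.Lmat_mul {M : ℕ} {T : Matrix (Fin n) (Fin n) (Module.End ℂ V)⟦X⟧} {v : V}
    {f : Fin n → ℂ⟦X⟧} (hT : IsHW T v f) {e : Fin n → Fin n → Module.End ℂ V} {μ : Fin n → ℂ}
    (he : ∀ a b, a < b → e a b v = 0) (heμ : ∀ a, e a a v = μ a • v)
    (hs : SuperComm M T (Lmat e)) :
    IsHW (Lmat e * T) v fun a => (1 + C (μ a) * X) * f a := by
  have key : ∀ a b c p, a < c → e a c (coeff p (T c b) v) = 0 := by
    intro a b c p hac
    have h := hs c b a c p 1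
    simp only [coeff_Lmat, one_ne_zero, if_false, if_true] at h
    have h' := LinearMap.congr_fun h v
    simp only [Module.End.mul_apply, LinearMap.smul_apply, he a c hac, map_zero] at h'
    have hne : sgn1 M c b a c ≠ 0 := pow_ne_zero _ (by norm_num)
    exact (smul_eq_zero.mp h'.symm).resolve_left hne
  refine ⟨fun a b hab p => ?_, fun a p => ?_⟩
  · rcases p with _ | p
    · rw [coeff_zero_Lmat_mul, hT.1 a b hab]
    · rw [coeff_succ_Lmat_mul, LinearMap.add_apply, hT.1 a b hab, zero_add, LinearMap.sum_apply]
      refine Finset.sum_eq_zero fun c _ => ?_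
      rw [Module.End.mul_apply]
      rcases lt_or_ge c b with h | h
      · rw [hT.1 c b h, map_zero]
      · exact key a b c p (hab.trans_le h)
  · rcases p with _ | p
    · rw [coeff_zero_Lmat_mul, hT.2 a]
      simp [coeff_mul]
    · rw [coeff_succ_Lmat_mul, LinearMap.add_apply, hT.2 a, LinearMap.sum_apply,
        Finset.sum_eq_single a]
      · rw [Module.End.mul_apply, hT.2 a, map_smul, heμ, smul_smul, ← add_smul]
        congr 1
        change _ = coeff (p + 1) ((1 + C (μ a) * X) * f a)
        rw [add_mul, one_mul, map_add, mul_assoc, coeff_C_mul, coeff_succ_X_mul, mul_comm (μ a)]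
      · intro c _ hc
        rw [Module.End.mul_apply]
        rcases lt_or_gt_of_ne hc with h | h
        · rw [hT.1 c a h, map_zero]
        · exact key a a c p h
      · simp

lemma isHW_one (v : V) : IsHW (1 : Matrix (Fin n) (Fin n) (Module.End ℂ V)⟦X⟧) v 1 := by
  refine ⟨fun a b hab p => ?_, fun a p => ?_⟩
  · simp [Matrix.one_apply_ne hab.ne]
  · simp only [Matrix.one_apply_eq, Pi.one_apply, coeff_one]
    split_ifs <;> simp

/-- The product of the matrices `1 + x e_s` over a finite family of supercommuting representations
`e_s` of `gl(M|N)` with a common maximal vector. -/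
lemma exists_monodromy (M : ℕ) {S : Type*} [DecidableEq S] (e : S → Fin n → Fin n → Module.End ℂ V)
    (v : V) (μ : S → Fin n → ℂ)
    (he : ∀ s i j k l, e s i j * e s k l = sgn1 M i j k l • (e s k l * e s i j)
      + sgn2 M i j k • ((if k = j then e s i l else 0) - if i = l then e s k j else 0))
    (hc : ∀ s s', s ≠ s' → ∀ i j k l, e s i j * e s' k l = sgn1 M i j k l • (e s' k l * e s i j))
    (h0 : ∀ s a b, a < b → e s a b v = 0) (hμ : ∀ s a, e s a a v = μ s a • v) (F : Finset S) :
    ∃ T : Matrix (Fin n) (Fin n) (Module.End ℂ V)⟦X⟧, IsRTT M T ∧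
      (∀ i j, coeff 0 (T i j) = (1 : Matrix (Fin n) (Fin n) (Module.End ℂ V)) i j) ∧
      (∀ s, s ∉ F → SuperComm M T (Lmat (e s))) ∧
      IsHW T v fun a => ∏ s ∈ F, (1 + C (μ s a) * X) := by
  induction F using Finset.induction_on with
  | empty =>
    refine ⟨1, isRTT_one M, fun i j => ?_, fun s _ => superComm_one M _, ?_⟩
    · simp only [Matrix.one_apply]; split_ifs <;> simp
    · simp only [Finset.prod_empty]; exact isHW_one v
  | insert s F hs ih =>
    obtain ⟨T, h1, h2, h3, h4⟩ := ih
    refine ⟨Lmat (e s) * T, (isRTT_Lmat M _ (he s)).mul M h1 (h3 s hs),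
      fun i j => by rw [coeff_zero_Lmat_mul, h2], fun s' hs' => ?_, ?_⟩
    · simp only [Finset.mem_insert, not_or] at hs'
      exact (superComm_Lmat M (hc s s' (Ne.symm hs'.1))).mul_left (h3 s' hs'.2)
    · simp only [Finset.prod_insert hs]
      exact h4.Lmat_mul (h0 s) (hμ s) (h3 s hs)

end HighestWeight

end

section

/-! ### From the RTT relation to the defining relations -/

section Realization

open PowerSeries

variable {n : ℕ} {A : Type*} [Ring A] [Algebra ℂ A]

/-- The supercommutator `[T_ij[p], T_kl[q]}`. -/
noncomputable def sbr (M : ℕ) (T : Matrix (Fin n) (Fin n) A⟦X⟧) (i j k l : Fin n) (p q : ℕ) : A :=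
  coeff p (T i j) * coeff q (T k l) - sgn1 M i j k l • (coeff q (T k l) * coeff p (T i j))

/-- The quadratic expression on the right-hand side of the RTT relation. -/
noncomputable def qbr (T : Matrix (Fin n) (Fin n) A⟦X⟧) (i j k l : Fin n) (p q : ℕ) : A :=
  coeff p (T k j) * coeff q (T i l) - coeff q (T k j) * coeff p (T i l)

lemma IsRTT.coeff {M : ℕ} {T : Matrix (Fin n) (Fin n) A⟦X⟧} (h : IsRTT M T) (i j k l : Fin n)
    (p q : ℕ) : sbr M T i j k l (p + 1) q
      = sbr M T i j k l p (q + 1) + sgn2 M i j k • qbr T i j k l p q := by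
  have h1 := congrArg (fun z => PowerSeries.coeff (q + 1) (PowerSeries.coeff (p + 1) z)) (h i j k l)
  simp only [sub_mul, mul_assoc, map_sub, coeff_succ_X_mul, coeff_C_mul, coeff_smul,
    coeff_map, coeff_mul_C] at h1
  rw [sub_eq_iff_eq_add] at h1
  unfold sbr qbr
  rw [h1, add_comm]

lemma IsRTT.sbr_eq {M : ℕ} {T : Matrix (Fin n) (Fin n) A⟦X⟧} (h : IsRTT M T)
    (h0 : ∀ i j, PowerSeries.coeff 0 (T i j) = (1 : Matrix (Fin n) (Fin n) A) i j)
    (i j k l : Fin n) (p q : ℕ) :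
    sbr M T i j k l p q
      = sgn2 M i j k • ∑ r ∈ Finset.range (min p q), qbr T i j k l r (p + q - 1 - r) := by
  have hl : ∀ q, sbr M T i j k l 0 q = 0 := fun q => by
    unfold sbr
    rw [h0]
    by_cases hij : i = j
    · subst hij; simp [sgn1_eq_one_left]
    · simp [Matrix.one_apply_ne hij]
  have hr : ∀ p, sbr M T i j k l p 0 = 0 := fun p => by
    unfold sbr
    rw [h0]
    by_cases hij : k = l
    · subst hij; simp [sgn1_eq_one_right]
    · simp [Matrix.one_apply_ne hij]
  have e1 : ∀ p q, sbr M T i j k l p q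
      = sgn2 M i j k • ∑ r ∈ Finset.range p, qbr T i j k l r (p + q - 1 - r) := by
    intro p
    induction p with
    | zero => intro q; simp [hl]
    | succ p ih =>
      intro q
      have hs : ∑ r ∈ Finset.range p, qbr T i j k l r (p + (q + 1) - 1 - r)
          = ∑ r ∈ Finset.range p, qbr T i j k l r (p + 1 + q - 1 - r) :=
        Finset.sum_congr rfl fun r _ => by congr 1; omega
      have hq : p + 1 + q - 1 - p = q := by omega
      rw [h.coeff, ih, Finset.sum_range_succ, smul_add, hs, hq]
  have e2 : ∀ q p, sbr M T i j k l p q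
      = sgn2 M i j k • ∑ r ∈ Finset.range q, qbr T i j k l r (p + q - 1 - r) := by
    intro q
    induction q with
    | zero => intro p; simp [hr]
    | succ q ih =>
      intro p
      have h1 := h.coeff i j k l p q
      rw [ih] at h1
      have hq : qbr T i j k l q (p + (q + 1) - 1 - q) = - qbr T i j k l p q := by
        have : p + (q + 1) - 1 - q = p := by omega
        rw [this]
        unfold qbr
        abel
      have hs : ∑ r ∈ Finset.range q, qbr T i j k l r (p + 1 + q - 1 - r)
          = ∑ r ∈ Finset.range q, qbr T i j k l r (p + (q + 1) - 1 - r) :=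
        Finset.sum_congr rfl fun r _ => by congr 1; omega
      rw [Finset.sum_range_succ, smul_add, hq, ← hs, h1, smul_neg]
      abel
  rcases le_total p q with hpq | hpq
  · rw [min_eq_left hpq]; exact e1 p q
  · rw [min_eq_right hpq]; exact e2 q p

/-- A solution of the RTT relation with constant term `1` is a representation of the super
Yangian. -/
lemma IsRTT.exists_rep (M N : ℕ) {T : Matrix (Fin (M + N)) (Fin (M + N)) A⟦X⟧} (h : IsRTT M T)
    (h0 : ∀ i j, PowerSeries.coeff 0 (T i j) = (1 : Matrix (Fin (M + N)) (Fin (M + N)) A) i j) :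
    ∃ ρ : Y M N →ₐ[ℂ] A, ∀ a b m, 1 ≤ m →
      ρ (t M N a b m) = (-1 : ℂ) ^ pa M b • PowerSeries.coeff m (T a b) := by
  let φ : F M N →ₐ[ℂ] A := FreeAlgebra.lift ℂ fun g =>
    (-1 : ℂ) ^ pa M g.2.1 • PowerSeries.coeff (g.2.2 + 1) (T g.1 g.2.1)
  have hφ : ∀ a b m, 1 ≤ m → φ (SY.T M N a b m)
      = (-1 : ℂ) ^ pa M b • PowerSeries.coeff m (T a b) := by
    intro a b m hm
    simp only [φ, SY.T, FreeAlgebra.lift_ι_apply]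
    rw [Nat.sub_add_cancel hm]
  have hrel : ∀ ⦃x y : F M N⦄, Rel M N x y → φ x = φ y := by
    rintro _ _ ⟨i, j, k, l, m, m', hm, hm'⟩
    have key := h.sbr_eq h0 i j k l m m'
    have hmin : min m m' = (min m m' - 1) + 1 := by omega
    rw [Finset.range_eq_Ico, Finset.sum_eq_sum_Ico_succ_bot (by omega)] at key
    have hsum : ∀ r ∈ Finset.Ico 1 (min m m'),
        φ (SY.T M N k j r * SY.T M N i l (m + m' - 1 - r)
          - SY.T M N k j (m + m' - 1 - r) * SY.T M N i l r)
        = ((-1 : ℂ) ^ pa M j * (-1) ^ pa M l) • qbr T i j k l r (m + m' - 1 - r) := by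
      intro r hr
      rw [Finset.mem_Ico] at hr
      rw [map_sub, map_mul, map_mul, hφ _ _ _ hr.1, hφ _ _ _ hr.1, hφ _ _ _ (by omega),
        hφ _ _ _ (by omega)]
      unfold qbr
      simp only [smul_mul_smul_comm, smul_sub]
    have hδ1 : φ (if j = k then SY.T M N i l (m + m' - 1) else 0)
        = ((-1 : ℂ) ^ pa M j * (-1) ^ pa M l * sgn2 M i j k) •
          ((1 : Matrix (Fin (M + N)) (Fin (M + N)) A) k j
            * PowerSeries.coeff (m + m' - 1) (T i l)) := by
      by_cases hjk : j = k
      · subst hjk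
        rw [if_pos rfl, hφ _ _ _ (by omega), Matrix.one_apply_eq, one_mul]
        congr 1
        unfold sgn2
        rcases pa_cases M i with h1 | h1 <;> rcases pa_cases M j with h2 | h2 <;>
          rcases pa_cases M l with h3 | h3 <;> norm_num [h1, h2, h3]
      · rw [if_neg hjk, Matrix.one_apply_ne (Ne.symm hjk)]; simp
    have hδ2 : sgn1 M i j k l • φ (if l = i then SY.T M N k j (m + m' - 1) else 0)
        = ((-1 : ℂ) ^ pa M j * (-1) ^ pa M l * sgn2 M i j k) •
          (PowerSeries.coeff (m + m' - 1) (T k j)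
            * (1 : Matrix (Fin (M + N)) (Fin (M + N)) A) i l) := by
      by_cases hjk : l = i
      · subst hjk
        rw [if_pos rfl, hφ _ _ _ (by omega), Matrix.one_apply_eq, mul_one, smul_smul]
        congr 1
        unfold sgn1 sgn2
        rcases pa_cases M k with h1 | h1 <;> rcases pa_cases M j with h2 | h2 <;>
          rcases pa_cases M l with h3 | h3 <;> norm_num [h1, h2, h3]
      · rw [if_neg hjk, Matrix.one_apply_ne (Ne.symm hjk)]; simp
    rw [map_sub, map_add, map_sub, map_smul, map_smul, map_smul, map_mul, map_mul, map_sum,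
      hδ1, hδ2, Finset.sum_congr rfl hsum, ← Finset.smul_sum, hφ _ _ _ hm, hφ _ _ _ hm']
    have key2 := congrArg (fun z => ((-1 : ℂ) ^ pa M j * (-1) ^ pa M l) • z) key
    simp only [sbr, smul_add, zero_add, Nat.sub_zero] at key2
    simp only [qbr, h0] at key2 ⊢
    simp only [smul_mul_smul_comm]
    rw [mul_comm ((-1 : ℂ) ^ pa M l), smul_comm (sgn1 M i j k l), ← smul_sub, key2]
    module
  refine ⟨RingQuot.liftAlgHom ℂ ⟨φ, hrel⟩, fun a b m hm => ?_⟩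
  rw [t, RingQuot.liftAlgHom_mkAlgHom_apply, hφ _ _ _ hm]

end Realization

/-- Every weight whose generating functions are the products below is realized by a maximal
vector of some representation. -/
lemma exists_realization (M N : ℕ) {S : Type} [Fintype S] [DecidableEq S] (k : S → ℕ)
    (β : S → Fin (M + N)) :
    ∃ (V : Type) (_ : AddCommGroup V) (_ : Module ℂ V) (ρ : Y M N →ₐ[ℂ] Module.End ℂ V) (v : V),
      v ≠ 0 ∧ IsSing M N ρ v fun a m => (-1 : ℂ) ^ pa M a *
        PowerSeries.coeff m (∏ s, (1 + PowerSeries.C (if a ≤ β s then -(k s : ℂ) else 0) *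
          PowerSeries.X)) := by
  obtain ⟨V, _, _, E, v, hv, hE, hE0, hEμ⟩ := exists_gl M (M + N) k β
  obtain ⟨T, h1, h2, -, h4⟩ := exists_monodromy M (fun s a b => (-1 : ℂ) ^ pa M b • E s a b) v
    (fun s a => if a ≤ β s then -(k s : ℂ) else 0)
    (by
      intro s i j k l
      rw [smul_mul_smul_comm, smul_mul_smul_comm, hE s s, if_pos rfl]
      have d1 : ((-1 : ℂ) ^ pa M j * (-1) ^ pa M l) • (if j = k then E s i l else 0)
          = sgn2 M i j k • (if k = j then (-1 : ℂ) ^ pa M l • E s i l else 0) := by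
        by_cases hjk : j = k
        · subst hjk
          rw [if_pos rfl, if_pos rfl, smul_smul]
          congr 1
          unfold sgn2
          rcases pa_cases M i with h1 | h1 <;> rcases pa_cases M j with h2 | h2 <;>
            rcases pa_cases M l with h3 | h3 <;> norm_num [h1, h2, h3]
        · simp [hjk, Ne.symm hjk]
      have d2 : ((-1 : ℂ) ^ pa M j * (-1) ^ pa M l * sgn1 M i j k l) •
            (if l = i then E s k j else 0)
          = sgn2 M i j k • (if i = l then (-1 : ℂ) ^ pa M j • E s k j else 0) := by
        by_cases hjk : l = i
        · subst hjk
          rw [if_pos rfl, if_pos rfl, smul_smul]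
          congr 1
          unfold sgn1 sgn2
          rcases pa_cases M k with h1 | h1 <;> rcases pa_cases M j with h2 | h2 <;>
            rcases pa_cases M l with h3 | h3 <;> norm_num [h1, h2, h3]
        · simp [hjk, Ne.symm hjk]
      rw [smul_add, smul_sub, smul_sub, d1, smul_smul _ (sgn1 M i j k l) (ite _ _ _), d2,
        mul_comm ((-1 : ℂ) ^ pa M l), smul_comm (sgn1 M i j k l)])
    (by
      intro s s' hs i j k l
      rw [smul_mul_smul_comm, smul_mul_smul_comm, hE s s', if_neg hs, add_zero,
        mul_comm ((-1 : ℂ) ^ pa M l), smul_comm (sgn1 M i j k l)])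
    (by intro s a b hab; simp [hE0 s a b hab])
    (by
      intro s a
      rw [LinearMap.smul_apply, hEμ, smul_smul]
      congr 1
      rcases pa_cases M a with h1 | h1 <;> simp [h1])
    Finset.univ
  obtain ⟨ρ, hρ⟩ := h1.exists_rep M N h2
  refine ⟨V, inferInstance, inferInstance, ρ, v, hv, fun a b hab m hm => ?_, fun a m hm => ?_⟩
  · rw [hρ _ _ _ hm, LinearMap.smul_apply, h4.1 a b hab, smul_zero]
  · rw [hρ _ _ _ hm, LinearMap.smul_apply, h4.2 a, smul_smul]

end

section

/-! ### Density of the realized weights and properness of the ideal -/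

section Density

/-- Over `ℂ`, a polynomial with constant term `1` is a product of factors `1 - α X`; factors with
`α = 0` pad the number of factors up to `L`. -/
lemma exists_prod_linear (L : ℕ) : ∀ g : Polynomial ℂ, g.natDegree ≤ L → g.coeff 0 = 1 →
    ∃ α : Fin L → ℂ, g = ∏ i, (1 + Polynomial.C (-α i) * Polynomial.X) := by
  induction L with
  | zero =>
    intro g hd h0
    refine ⟨0, ?_⟩
    rw [Polynomial.eq_C_of_natDegree_le_zero hd, h0]
    simp
  | succ L ih =>
    intro g hd h0
    by_cases hg : g.natDegree = 0
    · refine ⟨0, ?_⟩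
      rw [Polynomial.eq_C_of_natDegree_eq_zero hg, h0]
      simp
    · obtain ⟨z, hz⟩ := IsAlgClosed.exists_root g (Polynomial.degree_ne_of_natDegree_ne hg)
      obtain ⟨q, rfl⟩ := Polynomial.dvd_iff_isRoot.2 hz
      have hcoeff : -z * q.coeff 0 = 1 := by
        rw [Polynomial.mul_coeff_zero] at h0
        simpa using h0
      have hz0 : z ≠ 0 := by
        rintro rfl
        simp at hcoeff
      have hq0 : q ≠ 0 := by
        rintro rfl
        simp at hcoeff
      rw [Polynomial.natDegree_mul (Polynomial.X_sub_C_ne_zero z) hq0,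
        Polynomial.natDegree_X_sub_C] at hd
      obtain ⟨α, hα⟩ := ih (Polynomial.C (-z) * q)
        ((Polynomial.natDegree_C_mul_le _ _).trans (by omega)) (by simpa using hcoeff)
      refine ⟨Fin.cons z⁻¹ α, ?_⟩
      rw [Fin.prod_univ_succ]
      simp only [Fin.cons_zero, Fin.cons_succ]
      rw [← hα]
      have hC : Polynomial.C z⁻¹ * Polynomial.C z = 1 := by
        rw [← Polynomial.C_mul, inv_mul_cancel₀ hz0, Polynomial.C_1]
      simp only [Polynomial.C_neg]
      linear_combination (-Polynomial.X * q) * hC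

lemma telescope_prod {R : Type*} [CommRing R] (f g : ℕ → R) (hfg : ∀ b, f b * g b = 1) (a n : ℕ) :
    ∏ b ∈ Finset.range n, (if a ≤ b then f b * g (b + 1) else 1)
      = if a ≤ n then f a * g n else 1 := by
  induction n with
  | zero =>
    by_cases h : a = 0
    · subst h
      simp [hfg]
    · simp [h]
  | succ n ih =>
    rw [Finset.prod_range_succ, ih]
    rcases lt_trichotomy a (n + 1) with h | h | h
    · rw [if_pos (by omega), if_pos (by omega), if_pos (by omega)]
      linear_combination (f a * g (n + 1)) * hfg n
    · subst h
      simp [hfg]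
    · rw [if_neg (by omega), if_neg (by omega), if_neg (by omega), one_mul]

/-- Modulo `X ^ (L + 1)`, any family of power series with constant term `1` is of the shape taken
by the weights of the oscillator realizations, with complex parameters. The factors attached to
`b` approximate the quotient `f b / f (b + 1)`, and these quotients telescope. -/
lemma exists_approx (n L : ℕ) (f : Fin n → PowerSeries ℂ)
    (hf : ∀ a, PowerSeries.constantCoeff (f a) = 1) :
    ∃ α : Fin n × Fin L → ℂ, ∀ (a : Fin n) (m : ℕ), m ≤ L →
      PowerSeries.coeff m (∏ s : Fin n × Fin L,
        (1 + PowerSeries.C (if a ≤ s.1 then -α s else 0) * PowerSeries.X))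
        = PowerSeries.coeff m (f a) := by
  classical
  let F : ℕ → PowerSeries ℂ := fun b => if h : b < n then f ⟨b, h⟩ else 1
  have hF : ∀ b, PowerSeries.constantCoeff (F b) = 1 := by
    intro b
    by_cases h : b < n
    · simp [F, h, hf]
    · simp [F, h]
  have hFn : F n = 1 := by simp [F]
  have hFa : ∀ a : Fin n, F a = f a := fun a => by simp [F]
  have hinv : ∀ b, F b * (F b)⁻¹ = 1 := fun b =>
    PowerSeries.mul_inv_cancel _ (by rw [hF]; exact one_ne_zero)
  have hlin : ∀ b : ℕ, ∃ α : Fin L → ℂ, PowerSeries.trunc (L + 1) (F b * (F (b + 1))⁻¹)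
      = ∏ i, (1 + Polynomial.C (-α i) * Polynomial.X) := by
    intro b
    apply exists_prod_linear
    · exact Nat.lt_succ_iff.1 (PowerSeries.natDegree_trunc_lt _ _)
    · rw [PowerSeries.coeff_trunc, if_pos (Nat.succ_pos L),
        PowerSeries.coeff_zero_eq_constantCoeff_apply, map_mul, PowerSeries.constantCoeff_inv, hF,
        hF]
      simp
  choose α hα using hlin
  let I : Ideal (PowerSeries ℂ) := Ideal.span {PowerSeries.X ^ (L + 1)}
  have hI : ∀ x y : PowerSeries ℂ, Ideal.Quotient.mk I x = Ideal.Quotient.mk I y ↔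
      ∀ m, m < L + 1 → PowerSeries.coeff m x = PowerSeries.coeff m y := by
    intro x y
    rw [Ideal.Quotient.eq, Ideal.mem_span_singleton, PowerSeries.X_pow_dvd_iff]
    simp only [map_sub, sub_eq_zero]
  refine ⟨fun s => α s.1 s.2, fun a m hm => ?_⟩
  refine (hI _ _).1 ?_ m (Nat.lt_succ_of_le hm)
  rw [← hFa, Fintype.prod_prod_type, map_prod]
  have hfac : ∀ b : Fin n, Ideal.Quotient.mk I (∏ i : Fin L,
      (1 + PowerSeries.C (if a ≤ b then -α b i else 0) * PowerSeries.X))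
      = Ideal.Quotient.mk I (if (a : ℕ) ≤ b then F b * (F (b + 1))⁻¹ else 1) := by
    intro b
    by_cases hab : a ≤ b
    · have hab' : (a : ℕ) ≤ b := hab
      rw [hI]
      intro m hm
      have h := congrArg (fun p : Polynomial ℂ => PowerSeries.coeff m (p : PowerSeries ℂ)) (hα b)
      simp only [Polynomial.coeff_coe, PowerSeries.coeff_trunc, if_pos hm] at h
      rw [if_pos hab', h, ← Polynomial.coeff_coe]
      congr 1
      rw [← Polynomial.coeToPowerSeries.ringHom_apply, map_prod]
      simp [hab]
    · have hab' : ¬ (a : ℕ) ≤ b := hab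
      simp [hab, hab']
  rw [Finset.prod_congr rfl fun b _ => hfac b, ← map_prod,
    Fin.prod_univ_eq_prod_range (fun b => if (a : ℕ) ≤ b then F b * (F (b + 1))⁻¹ else 1) n,
    telescope_prod F (fun b => (F b)⁻¹) hinv, if_pos a.2.le, hFn]
  simp

end Density

section Proper

variable {M N : ℕ}

/-- The weight component `λ_a[m]` of an oscillator realization, as a polynomial in the
parameters. -/
noncomputable def genericWeight (M N L : ℕ) (a : Fin (M + N)) (m : ℕ) :
    MvPolynomial (Fin (M + N) × Fin L) ℂ :=
  MvPolynomial.C ((-1 : ℂ) ^ pa M a) * PowerSeries.coeff m (∏ s : Fin (M + N) × Fin L,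
    (1 + PowerSeries.C (if a ≤ s.1 then -MvPolynomial.X s else 0) * PowerSeries.X))

lemma eval_genericWeight (L : ℕ) (α : Fin (M + N) × Fin L → ℂ) (a : Fin (M + N)) (m : ℕ) :
    MvPolynomial.eval α (genericWeight M N L a m)
      = (-1 : ℂ) ^ pa M a * PowerSeries.coeff m (∏ s : Fin (M + N) × Fin L,
        (1 + PowerSeries.C (if a ≤ s.1 then -α s else 0) * PowerSeries.X)) := by
  rw [genericWeight, map_mul, MvPolynomial.eval_C, ← PowerSeries.coeff_map, map_prod]
  congr 2
  refine Finset.prod_congr rfl fun s _ => ?_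
  by_cases h : a ≤ s.1 <;> simp [h]

/-- A polynomial in the weight components which takes the value `1` on every oscillator weight
takes the value `1` on every weight. -/
lemma evalW_eq_one (q : MvPolynomial (Fin (M + N) × ℕ) ℂ)
    (hq : ∀ (L : ℕ) (k : Fin (M + N) × Fin L → ℕ),
      evalW (fun a m => (-1 : ℂ) ^ pa M a * PowerSeries.coeff m (∏ s : Fin (M + N) × Fin L,
        (1 + PowerSeries.C (if a ≤ s.1 then -(k s : ℂ) else 0) * PowerSeries.X))) q = 1)
    (Λ : Fin (M + N) → ℕ → ℂ) : evalW Λ q = 1 := by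
  obtain ⟨L, hL⟩ : ∃ L : ℕ, ∀ x ∈ q.vars, x.2 + 1 ≤ L :=
    ⟨q.vars.sup fun x => x.2 + 1, fun x hx => Finset.le_sup (f := fun x => x.2 + 1) hx⟩
  let Q := MvPolynomial.bind₁ (fun x : Fin (M + N) × ℕ => genericWeight M N L x.1 (x.2 + 1)) q
  have hQ : ∀ α : Fin (M + N) × Fin L → ℂ, MvPolynomial.eval α Q =
      evalW (fun a m => (-1 : ℂ) ^ pa M a * PowerSeries.coeff m (∏ s : Fin (M + N) × Fin L,
        (1 + PowerSeries.C (if a ≤ s.1 then -α s else 0) * PowerSeries.X))) q := by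
    intro α
    simp only [Q, evalW, ← eval_genericWeight]
    rw [MvPolynomial.eval, MvPolynomial.eval₂Hom_bind₁]
    rfl
  have hQ1 : Q = 1 := by
    refine MvPolynomial.funext_set (fun _ => Set.range (Nat.cast : ℕ → ℂ))
      (fun _ => Set.infinite_range_of_injective Nat.cast_injective) fun x hx => ?_
    choose k hk using fun s => hx s (Set.mem_univ s)
    obtain rfl : (fun s => (k s : ℂ)) = x := funext hk
    rw [hQ, hq, map_one]
  -- The sign relates `λ_a[m]` to a coefficient of a power series with constant term `1`.
  obtain ⟨α, hα⟩ := exists_approx (M + N) L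
    (fun a => PowerSeries.mk fun m => if m = 0 then 1 else (-1 : ℂ) ^ pa M a * Λ a m)
    (fun a => by simp [← PowerSeries.coeff_zero_eq_constantCoeff_apply])
  have h1 : MvPolynomial.eval α Q = 1 := by rw [hQ1, map_one]
  rw [← h1, hQ]
  refine MvPolynomial.eval₂Hom_congr' rfl (fun x hx _ => ?_) rfl
  beta_reduce
  rw [hα _ _ (hL x hx), PowerSeries.coeff_mk, if_neg (Nat.succ_ne_zero _), ← mul_assoc, ← mul_pow]
  simp

/-- The left ideal `J(Λ)` is proper. -/
lemma one_notMem_vermaIdeal (Λ : Fin (M + N) → ℕ → ℂ) : (1 : Y M N) ∉ vermaIdeal M N Λ := by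
  intro h
  obtain ⟨q, hq0, hq⟩ := exists_poly_of_mem Λ h
  refine zero_ne_one (hq0.symm.trans (evalW_eq_one q (fun L k => ?_) Λ))
  obtain ⟨V, _, _, ρ, v, hv0, hv⟩ := exists_realization M N k (Prod.fst : Fin (M + N) × Fin L → _)
  have h1 := hq V ρ v _ hv
  rw [map_one, Module.End.one_apply] at h1
  have h2 := eq_zero_of_smul_mem_away hv.H_apply hv0
    (c := 1 - evalW (fun a m => (-1 : ℂ) ^ pa M a * PowerSeries.coeff m
      (∏ s : Fin (M + N) × Fin L,
        (1 + PowerSeries.C (if a ≤ s.1 then -(k s : ℂ) else 0) * PowerSeries.X))) q)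
    (by rw [sub_smul, one_smul]; exact h1)
  exact (sub_eq_zero.1 h2).symm

end Proper

end

/-! ### The Verma-type module -/

section Verma

variable {M N : ℕ}

/-- The action of the super Yangian on `V̄(Λ)`, by complex-linear endomorphisms. -/
noncomputable def vermaRep (M N : ℕ) (Λ : Fin (M + N) → ℕ → ℂ) :
    Y M N →ₐ[ℂ] Module.End ℂ (Y M N ⧸ vermaIdeal M N Λ) :=
  Algebra.lsmul ℂ ℂ (Y M N ⧸ vermaIdeal M N Λ)

lemma vermaRep_apply (Λ : Fin (M + N) → ℕ → ℂ) (y : Y M N) (w : Y M N ⧸ vermaIdeal M N Λ) :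
    vermaRep M N Λ y w = y • w := rfl

lemma smul_vermaVplus (Λ : Fin (M + N) → ℕ → ℂ) (y : Y M N) :
    y • vermaVplus M N Λ = Submodule.Quotient.mk y := by
  rw [vermaVplus, ← Submodule.Quotient.mk_smul, smul_eq_mul, mul_one]

lemma vermaVplus_ne_zero (Λ : Fin (M + N) → ℕ → ℂ) : vermaVplus M N Λ ≠ 0 := by
  rw [vermaVplus, Ne, Submodule.Quotient.mk_eq_zero]
  exact one_notMem_vermaIdeal Λ

lemma upper_smul_vermaVplus (Λ : Fin (M + N) → ℕ → ℂ) (a b : Fin (M + N)) (n : ℕ) (hab : a < b)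
    (hn : 1 ≤ n) : t M N a b n • vermaVplus M N Λ = 0 := by
  rw [smul_vermaVplus, Submodule.Quotient.mk_eq_zero]
  exact Submodule.subset_span (Or.inl ⟨a, b, n, hab, hn, rfl⟩)

lemma diag_smul_vermaVplus (Λ : Fin (M + N) → ℕ → ℂ) (a : Fin (M + N)) (n : ℕ) (hn : 1 ≤ n) :
    t M N a a n • vermaVplus M N Λ = algebraMap ℂ (Y M N) (Λ a n) • vermaVplus M N Λ := by
  rw [smul_vermaVplus, smul_vermaVplus]
  exact (Submodule.Quotient.eq _).2 (Submodule.subset_span (Or.inr ⟨a, n, hn, rfl⟩))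

lemma isSing_vermaVplus (Λ : Fin (M + N) → ℕ → ℂ) :
    IsSing M N (vermaRep M N Λ) (vermaVplus M N Λ) Λ := by
  refine ⟨fun a b hab n hn => upper_smul_vermaVplus Λ a b n hab hn, fun a n hn => ?_⟩
  rw [vermaRep_apply, diag_smul_vermaVplus Λ a n hn, algebraMap_smul]

/-- If `w` has a nonzero component along the eigenvector `v` of `H`, then `v` lies in the submodule
generated by `w`: a polynomial in `H` that kills the remaining components of `w` and not `v` maps
`w` to a nonzero multiple of `v`. -/
lemma exists_map_eq_of_sub_mem_away {A V : Type*} [Ring A] [Algebra ℂ A] [AddCommGroup V]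
    [Module ℂ V] (ρ : A →ₐ[ℂ] Module.End ℂ V) {H : A} {h c : ℂ} {v w : V} (hv : ρ H v = h • v)
    (hw : w - c • v ∈ away (ρ H) h) (hc : c ≠ 0) : ∃ x : A, ρ x w = v := by
  obtain ⟨f, hf, hfw⟩ := hw
  rw [map_sub, sub_eq_zero, map_smul, aeval_eigen hv, Polynomial.aeval_algHom_apply,
    smul_smul] at hfw
  refine ⟨(c * f.eval h)⁻¹ • Polynomial.aeval H f, ?_⟩
  rw [map_smul, LinearMap.smul_apply, hfw, smul_smul, inv_mul_cancel₀ (mul_ne_zero hc hf),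
    one_smul]

lemma mem_away_of_forall {A V : Type*} [Ring A] [Algebra ℂ A] [AddCommGroup V]
    [Module ℂ V] (ρ : A →ₐ[ℂ] Module.End ℂ V) {H : A} {h c : ℂ} {v w : V} (hv : ρ H v = h • v)
    (hw : w - c • v ∈ away (ρ H) h) (hne : ∀ x : A, ρ x w ≠ v) : w ∈ away (ρ H) h := by
  by_cases hc : c = 0
  · rwa [hc, zero_smul, sub_zero] at hw
  · obtain ⟨x, hx⟩ := exists_map_eq_of_sub_mem_away ρ hv hw hc
    exact absurd hx (hne x)

/-- A submodule not containing `v_+` has no component along `v_+`. -/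
lemma mem_away_of_mem (Λ : Fin (M + N) → ℕ → ℂ)
    (W : Submodule (Y M N) (Y M N ⧸ vermaIdeal M N Λ)) (hW : vermaVplus M N Λ ∉ W)
    {w : Y M N ⧸ vermaIdeal M N Λ} (hw : w ∈ W) :
    w ∈ away (vermaRep M N Λ (Hel M N)) (h0 Λ) := by
  have hsing := isSing_vermaVplus Λ
  obtain ⟨y, rfl⟩ := Submodule.Quotient.mk_surjective _ w
  rw [← smul_vermaVplus] at hw ⊢
  obtain ⟨p, hp⟩ := exists_poly y
  refine mem_away_of_forall (vermaRep M N Λ) hsing.H_apply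
    (hp _ (vermaRep M N Λ) (vermaVplus M N Λ) Λ hsing) fun x hx => hW ?_
  rw [← hx]
  exact W.smul_mem x hw

end Verma

/-- **Verma-type modules** : `V̄(Λ) ≠ 0`, its cyclic vector `v_+` is a maximal vector of
weight `Λ`, and `V̄(Λ)` has a unique maximal proper submodule: the sum of all submodules not
containing `v_+` is a proper submodule containing every proper submodule. -/
theorem verma_module (M N : ℕ) (hMN : 1 ≤ M + N) (Λ : Fin (M + N) → ℕ → ℂ) :
    vermaVplus M N Λ ≠ 0 ∧
    (∀ (a b : Fin (M + N)) (n : ℕ), a < b → 1 ≤ n →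
      t M N a b n • vermaVplus M N Λ = 0) ∧
    (∀ (a : Fin (M + N)) (n : ℕ), 1 ≤ n →
      t M N a a n • vermaVplus M N Λ = algebraMap ℂ (Y M N) (Λ a n) • vermaVplus M N Λ) ∧
    sSup {W : Submodule (Y M N) (Y M N ⧸ vermaIdeal M N Λ) | vermaVplus M N Λ ∉ W} ≠ ⊤ ∧
    (∀ W : Submodule (Y M N) (Y M N ⧸ vermaIdeal M N Λ), W ≠ ⊤ →
      W ≤ sSup {W' : Submodule (Y M N) (Y M N ⧸ vermaIdeal M N Λ) | vermaVplus M N Λ ∉ W'}) := by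
  refine ⟨vermaVplus_ne_zero Λ, fun a b n => upper_smul_vermaVplus Λ a b n,
    diag_smul_vermaVplus Λ, fun htop => ?_, fun W hW => le_sSup fun hmem => hW ?_⟩
  · have hall : ∀ w ∈ sSup {W : Submodule (Y M N) (Y M N ⧸ vermaIdeal M N Λ) |
        vermaVplus M N Λ ∉ W}, w ∈ away (vermaRep M N Λ (Hel M N)) (h0 Λ) := by
      intro w hw
      rw [sSup_eq_iSup'] at hw
      induction hw using Submodule.iSup_induction' with
      | mem W x hx => exact mem_away_of_mem Λ W.1 W.2 hx
      | zero => exact Submodule.zero_mem _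
      | add x y _ _ hx hy => exact Submodule.add_mem _ hx hy
    have h1 := hall (vermaVplus M N Λ) (by rw [htop]; trivial)
    exact one_ne_zero (eq_zero_of_smul_mem_away (isSing_vermaVplus Λ).H_apply
      (vermaVplus_ne_zero Λ) (c := 1) (by rwa [one_smul]))
  · rw [eq_top_iff]
    intro w _
    obtain ⟨y, rfl⟩ := Submodule.Quotient.mk_surjective _ w
    rw [← smul_vermaVplus]
    exact W.smul_mem y hmem

end SY
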